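/- arXiv:1803.04568 — 2 statements merged into one kernel-verified Lean document; each statement's English description precedes it below -/
import Mathlib

section
/- Let B = B(0,1) be the open unit ball in ℝ². There exists a Lipschitz function f on B such that Δf (in the sense of distributions) belongs to L¹(B), but the distributional second derivative ∂_x² f does not belong to L¹(B). -/
open MeasureTheory Real

noncomputable section

/-- First partial derivative (with respect to the first coordinate) on `ℝ²`. -/
def pd1 (f : ℝ × ℝ → ℝ) (p : ℝ × ℝ) : ℝ := fderiv ℝ f p (1, 0)

/-- Second partial derivative (with respect to the second coordinate) on `ℝ²`. -/
def pd2 (f : ℝ × ℝ → ℝ) (p : ℝ × ℝ) : ℝ := fderiv ℝ f p (0, 1)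

/-- Test functions: smooth compactly supported functions on `ℝ²`. -/
def IsTest (φ : ℝ × ℝ → ℝ) : Prop := ContDiff ℝ (⊤ : ℕ∞) φ ∧ HasCompactSupport φ

/-- The open Euclidean unit ball `B(0,1)` in `ℝ²`. -/
def uball : Set (ℝ × ℝ) := {p : ℝ × ℝ | p.1 ^ 2 + p.2 ^ 2 < 1}

/-!
If every Lipschitz `f` with `Δf ∈ L¹(B)` had `∂_x² f ∈ L¹(B)`, the closed graph theorem would bound
`‖∂_x² f‖₁` by a multiple of the maximum of `sup |f|`, the Lipschitz constant of `f` and `‖Δf‖₁`.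

Smooth functions violate such a bound. Let `u = log (η² + (1 - cos x) + (1 - cos y))`. Near the
lattice points `Δu` is essentially a smoothed Dirac mass, so that on a period cell its `L¹` norm
stays bounded as `η → 0`, while `∂_x² u` approaches a multiple of `(y² - x²) / (x² + y²)²`, which is
not integrable at the origin: its `L¹` norm grows like `log (1 / η)`. Replacing `u p` by
`N⁻² u (N p)` with `N ∈ 2πℕ` large makes the sup norm and the Lipschitz constant at most `1`, and
only changes the mean of the second derivatives by constant factors on passing from cell to ball.
-/

open scoped ENNReal BoundedContinuousFunction

section ClosedGraph

variable {𝕜 X Y Z F F' : Type*} [NontriviallyNormedField 𝕜]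
  [NormedAddCommGroup X] [NormedSpace 𝕜 X] [CompleteSpace X]
  [NormedAddCommGroup Y] [NormedSpace 𝕜 Y] [CompleteSpace Y]
  [NormedAddCommGroup Z] [NormedSpace 𝕜 Z] [CompleteSpace Z]
  [AddCommGroup F] [Module 𝕜 F] [TopologicalSpace F] [T2Space F]
  [AddCommGroup F'] [Module 𝕜 F'] [TopologicalSpace F'] [T2Space F']

theorem exists_clm_comp_eq_of_forall_mem_range (S : X →L[𝕜] F) {J : Y →L[𝕜] F}
    (hJ : Function.Injective J) (hS : ∀ x, ∃ y, J y = S x) : ∃ T : X →L[𝕜] Y, J ∘L T = S := by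
  let T : X →ₗ[𝕜] Y := LinearMap.codRestrictOfInjective (S : X →ₗ[𝕜] F) (J : Y →ₗ[𝕜] F) hJ hS
  have J_T (x : X) : J (T x) = S x := LinearMap.codRestrictOfInjective_comp_apply ..
  have graph_eq : (T.graph : Set (X × Y)) = {z | J z.2 = S z.1} := by
    ext z
    rw [SetLike.mem_coe, LinearMap.mem_graph_iff, Set.mem_ofPred_eq, ← J_T, hJ.eq_iff]
  have T_continuous : Continuous T := T.continuous_of_isClosed_graph <| graph_eq ▸
    isClosed_eq (J.continuous.comp continuous_snd) (S.continuous.comp continuous_fst)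
  exact ⟨⟨T, T_continuous⟩, ContinuousLinearMap.ext J_T⟩

theorem exists_norm_le_of_forall_exists_eq [IsTopologicalAddGroup F] {A : X →L[𝕜] F}
    {I : Y →L[𝕜] F} {B : X →L[𝕜] F'} {J : Z →L[𝕜] F'} (hJ : Function.Injective J)
    (h : ∀ x y, I y = A x → ∃ z, J z = B x) :
    ∃ C : ℝ, ∀ x y z, I y = A x → J z = B x → ‖z‖ ≤ C * max ‖x‖ ‖y‖ := by
  let D := (A ∘L .fst 𝕜 X Y - I ∘L .snd 𝕜 X Y).ker
  have mem_D {w : X × Y} : w ∈ D ↔ I w.2 = A w.1 := sub_eq_zero.trans eq_comm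
  obtain ⟨T, J_T⟩ := exists_clm_comp_eq_of_forall_mem_range
    (B ∘L .fst 𝕜 X Y ∘L D.subtypeL) hJ fun w => h w.1.1 w.1.2 (mem_D.1 w.2)
  refine ⟨‖T‖, fun x y z hy hz => ?_⟩
  let w : D := ⟨(x, y), mem_D.2 hy⟩
  have T_w : T w = z := hJ <| congr($J_T w).trans hz.symm
  exact T_w ▸ T.le_opNorm w

end ClosedGraph

section BoundedLipschitz

variable {α E : Type*} [PseudoMetricSpace α] [NormedAddCommGroup E] [NormedSpace ℝ E]

/-- The space of bounded Lipschitz functions on `α`, normed by the maximum of the supremum norm and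
the best Lipschitz constant. To make completeness evident, each function `f` carries along its
bounded family of slopes `q`, normalized by `f a - f b = dist a b • q (a, b)`. -/
def boundedLipschitz (α E : Type*) [PseudoMetricSpace α] [NormedAddCommGroup E]
    [NormedSpace ℝ E] : Submodule ℝ ((α →ᵇ E) × lp (fun _ : α × α => E) ∞) where
  carrier := {x | ∀ a b, x.1 a - x.1 b = dist a b • x.2 (a, b)}
  zero_mem' := by simp
  add_mem' {x y} hx hy a b := by
    simp only [Prod.fst_add, Prod.snd_add, BoundedContinuousFunction.add_apply, lp.coeFn_add,
      Pi.add_apply, smul_add, ← hx a b, ← hy a b]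
    abel
  smul_mem' c x hx a b := by
    simp only [Prod.smul_fst, Prod.smul_snd, BoundedContinuousFunction.coe_smul, lp.coeFn_smul,
      Pi.smul_apply, smul_comm _ c, ← smul_sub, ← hx a b]

instance [CompleteSpace E] : CompleteSpace (boundedLipschitz α E) := by
  refine IsClosed.completeSpace_coe (hs := ?_)
  have slope_continuous (c : α × α) :
      Continuous fun x : (α →ᵇ E) × lp (fun _ : α × α => E) ∞ => x.2 c :=
    (lp.evalCLM ℝ (fun _ : α × α => E) ∞ c).continuous.comp continuous_snd
  have value_continuous (a : α) :
      Continuous fun x : (α →ᵇ E) × lp (fun _ : α × α => E) ∞ => x.1 a :=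
    (BoundedContinuousFunction.evalCLM ℝ a).continuous.comp continuous_fst
  simp only [boundedLipschitz, Set.ofPred_forall]
  exact isClosed_iInter fun a => isClosed_iInter fun b => isClosed_eq
    ((value_continuous a).sub (value_continuous b)) ((slope_continuous (a, b)).const_smul _)

theorem boundedLipschitz.lipschitzWith (x : boundedLipschitz α E) :
    LipschitzWith ‖x.1.2‖₊ x.1.1 := by
  refine LipschitzWith.of_dist_le_mul fun a b => ?_
  rw [dist_eq_norm, x.2 a b, norm_smul, Real.norm_of_nonneg dist_nonneg, mul_comm]
  gcongr
  exact lp.norm_apply_le_norm ENNReal.top_ne_zero x.1.2 (a, b)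

theorem exists_boundedLipschitz_norm_le {f : α → E} {M : NNReal} (hM : ∀ a, ‖f a‖ ≤ M)
    (hf : LipschitzWith M f) : ∃ x : boundedLipschitz α E, ⇑x.1.1 = f ∧ ‖x‖ ≤ M := by
  let q (c : α × α) : E := (dist c.1 c.2)⁻¹ • (f c.1 - f c.2)
  have q_le (c : α × α) : ‖q c‖ ≤ M := by
    rw [norm_smul, norm_inv, Real.norm_of_nonneg dist_nonneg, ← dist_eq_norm, inv_mul_eq_div]
    exact div_le_of_le_mul₀ dist_nonneg M.2 (hf.dist_le_mul _ _)
  let x : (α →ᵇ E) × lp (fun _ : α × α => E) ∞ :=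
    (.ofNormedAddCommGroup f hf.continuous M hM,
      ⟨q, memℓp_infty ⟨M, Set.forall_mem_range.2 q_le⟩⟩)
  refine ⟨⟨x, fun a b => ?_⟩, rfl, max_le ?_ ?_⟩
  · change f a - f b = dist a b • (dist a b)⁻¹ • (f a - f b)
    rcases eq_or_ne (dist a b) 0 with hab | hab
    · have dist_le := hf.dist_le_mul a b
      rw [hab, mul_zero, dist_eq_norm, norm_le_zero_iff] at dist_le
      rw [dist_le, smul_zero, smul_zero]
    · rw [smul_inv_smul₀ hab]
  · exact BoundedContinuousFunction.norm_ofNormedAddCommGroup_le _ M.2 hM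
  · exact lp.norm_le_of_forall_le M.2 q_le

end BoundedLipschitz

section WeakImage

/-- `g ∈ L¹(Ω)` is the image of `f` under the differential operator `P` in the sense of
distributions on `Ω`. Only formally self-adjoint operators of even order occur here, so `P` itself
is moved to the test function. -/
def HasWeakImage (P : (ℝ × ℝ → ℝ) → ℝ × ℝ → ℝ) (Ω : Set (ℝ × ℝ)) (f g : ℝ × ℝ → ℝ) : Prop :=
  IntegrableOn g Ω ∧ ∀ φ : ℝ × ℝ → ℝ, IsTest φ → tsupport φ ⊆ Ω →
    ∫ p in Ω, g p * φ p = ∫ p in Ω, f p * P φ p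

/-- Test functions with support in `Ω`, the index type of the coordinates of a distribution. -/
abbrev TestOn (Ω : Set (ℝ × ℝ)) : Type := {φ : ℝ × ℝ → ℝ // IsTest φ ∧ tsupport φ ⊆ Ω}

variable {Ω : Set (ℝ × ℝ)} {P Q : (ℝ × ℝ → ℝ) → ℝ × ℝ → ℝ}

theorem IsTest.memLp_top {φ : ℝ × ℝ → ℝ} (hφ : IsTest φ) (μ : Measure (ℝ × ℝ)) :
    MemLp φ ∞ μ :=
  hφ.1.continuous.memLp_top_of_hasCompactSupport hφ.2 μ

/-- The distribution `φ ↦ ∫ f * P φ` on `Ω` attached to `f ∈ L¹(Ω)`; the topology on the target is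
that of pointwise convergence on test functions. -/
def weakAction (Ω : Set (ℝ × ℝ)) (hP : ∀ φ, IsTest φ → IsTest (P φ)) :
    Lp ℝ 1 (volume.restrict Ω) →L[ℝ] (TestOn Ω → ℝ) :=
  ContinuousLinearMap.pi fun φ =>
    ((ContinuousLinearMap.mul ℝ ℝ).lpPairing (volume.restrict Ω) 1 ∞).flip
      (((hP φ φ.2.1).memLp_top _).toLp (P φ))

theorem weakAction_apply (hP : ∀ φ, IsTest φ → IsTest (P φ)) {f : ℝ × ℝ → ℝ}
    {F : Lp ℝ 1 (volume.restrict Ω)} (hF : F =ᵐ[volume.restrict Ω] f) (φ : TestOn Ω) :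
    weakAction Ω hP F φ = ∫ p in Ω, f p * P φ p := by
  rw [weakAction, ContinuousLinearMap.pi_apply, ContinuousLinearMap.flip_apply,
    ContinuousLinearMap.lpPairing_eq_integral]
  refine integral_congr_ae ?_
  filter_upwards [hF, ((hP φ φ.2.1).memLp_top (volume.restrict Ω)).coeFn_toLp] with p hFp hφp
  rw [hFp, hφp, ContinuousLinearMap.mul_apply']

theorem setIntegral_mul_eq_integral_of_tsupport_subset {X : Type*} [TopologicalSpace X]
    [MeasurableSpace X] {μ : Measure X} {s : Set X} {f φ : X → ℝ} (hφ : tsupport φ ⊆ s) :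
    ∫ p in s, f p * φ p ∂μ = ∫ p, f p * φ p ∂μ :=
  setIntegral_eq_integral_of_forall_compl_eq_zero fun p hp => by
    rw [image_eq_zero_of_notMem_tsupport fun h => hp (hφ h), mul_zero]

theorem weakAction_id_injective (hΩ : IsOpen Ω) :
    Function.Injective (weakAction (P := id) Ω fun _ hφ => hφ) := by
  refine (injective_iff_map_eq_zero _).2 fun F hF => Lp.eq_zero_iff_ae_eq_zero.2 ?_
  refine (ae_restrict_iff' hΩ.measurableSet).2 <|
    hΩ.ae_eq_zero_of_integral_contDiff_smul_eq_zero
      (IntegrableOn.locallyIntegrableOn (L1.integrable_coeFn F))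
      fun φ φ_smooth φ_compact φ_sub => ?_
  have action_eq := weakAction_apply (P := id) (fun _ hφ => hφ) (ae_eq_refl F)
    ⟨φ, ⟨φ_smooth, φ_compact⟩, φ_sub⟩
  rw [hF, Pi.zero_apply] at action_eq
  simp only [smul_eq_mul, mul_comm (φ _)]
  exact (setIntegral_mul_eq_integral_of_tsupport_subset φ_sub).symm.trans action_eq.symm

theorem hasWeakImage_iff_weakAction_eq (hP : ∀ φ, IsTest φ → IsTest (P φ))
    {f g : ℝ × ℝ → ℝ} {F G : Lp ℝ 1 (volume.restrict Ω)}
    (hF : F =ᵐ[volume.restrict Ω] f) (hG : G =ᵐ[volume.restrict Ω] g) :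
    HasWeakImage P Ω f g ↔ weakAction (P := id) Ω (fun _ hφ => hφ) G = weakAction Ω hP F := by
  have g_integrable : IntegrableOn g Ω := (L1.integrable_coeFn G).congr hG
  simp only [HasWeakImage, g_integrable, true_and, funext_iff, weakAction_apply _ hF,
    weakAction_apply _ hG, Subtype.forall, and_imp, id_eq]

theorem exists_integral_weakImage_le (hΩ : IsOpen Ω) [IsFiniteMeasure (volume.restrict Ω)]
    (hP : ∀ φ, IsTest φ → IsTest (P φ)) (hQ : ∀ φ, IsTest φ → IsTest (Q φ))
    (hPQ : ∀ f : ℝ × ℝ → ℝ, (∃ K, LipschitzWith K f) → (∃ g, HasWeakImage P Ω f g) →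
      ∃ h, HasWeakImage Q Ω f h) :
    ∃ C : ℝ, ∀ (M : NNReal) (f g h : ℝ × ℝ → ℝ), (∀ p, |f p| ≤ M) → LipschitzWith M f →
      ∫ p in Ω, |g p| ≤ M → HasWeakImage P Ω f g → HasWeakImage Q Ω f h →
        ∫ p in Ω, |h p| ≤ C * M := by
  let toL1 : boundedLipschitz (ℝ × ℝ) ℝ →L[ℝ] Lp ℝ 1 (volume.restrict Ω) :=
    BoundedContinuousFunction.toLp 1 _ ℝ ∘L .fst ℝ _ _ ∘L Submodule.subtypeL _
  have toL1_ae_eq (x : boundedLipschitz (ℝ × ℝ) ℝ) : toL1 x =ᵐ[volume.restrict Ω] x.1.1 :=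
    BoundedContinuousFunction.coeFn_toLp 1 _ ℝ x.1.1
  obtain ⟨C, hC⟩ := exists_norm_le_of_forall_exists_eq
    (A := weakAction Ω hP ∘L toL1) (I := weakAction (P := id) Ω fun _ hφ => hφ)
    (B := weakAction Ω hQ ∘L toL1) (weakAction_id_injective hΩ) fun x G hG => by
      obtain ⟨h, hh⟩ := hPQ x.1.1 ⟨_, boundedLipschitz.lipschitzWith x⟩
        ⟨G, (hasWeakImage_iff_weakAction_eq hP (toL1_ae_eq x) (ae_eq_refl G)).2 hG⟩
      exact ⟨hh.1.toL1 h,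
        (hasWeakImage_iff_weakAction_eq hQ (toL1_ae_eq x) hh.1.coeFn_toL1).1 hh⟩
  refine ⟨|C|, fun M f g h hfM hfL hgM hg hh => ?_⟩
  obtain ⟨x, rfl, hx⟩ := exists_boundedLipschitz_norm_le hfM hfL
  have norm_g_le : ‖hg.1.toL1 g‖ ≤ M := (L1.norm_of_fun_eq_integral_norm hg.1).trans_le hgM
  calc ∫ p in Ω, |h p| = ‖hh.1.toL1 h‖ := (L1.norm_of_fun_eq_integral_norm hh.1).symm
    _ ≤ C * max ‖x‖ ‖hg.1.toL1 g‖ := hC x _ _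
        ((hasWeakImage_iff_weakAction_eq hP (toL1_ae_eq x) hg.1.coeFn_toL1).1 hg)
        ((hasWeakImage_iff_weakAction_eq hQ (toL1_ae_eq x) hh.1.coeFn_toL1).1 hh)
    _ ≤ |C| * M := by gcongr; exacts [le_abs_self C, max_le hx norm_g_le]

end WeakImage

/-- The directional derivative `∂ᵥ f`, treating `pd1` (`v = (1, 0)`) and `pd2` (`v = (0, 1)`)
together. -/
def dirDeriv {E : Type*} [NormedAddCommGroup E] [NormedSpace ℝ E] (v : E) (f : E → ℝ) (p : E) : ℝ :=
  fderiv ℝ f p v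

section DirDeriv

variable {E : Type*} [NormedAddCommGroup E] [NormedSpace ℝ E] {f : E → ℝ}

theorem contDiff_dirDeriv (v : E) (hf : ContDiff ℝ (⊤ : ℕ∞) f) :
    ContDiff ℝ (⊤ : ℕ∞) (dirDeriv v f) :=
  (hf.fderiv_right (m := (⊤ : ℕ∞)) le_rfl).clm_apply contDiff_const

theorem tsupport_dirDeriv_subset (v : E) (f : E → ℝ) : tsupport (dirDeriv v f) ⊆ tsupport f :=
  tsupport_fderiv_apply_subset ℝ v

theorem dirDeriv_comp_smul (v : E) (c : ℝ) (f : E → ℝ) :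
    dirDeriv v (fun p => f (c • p)) = fun p => c * dirDeriv v f (c • p) :=
  funext fun _ => congr($(fderiv_comp_smul (f := f) c) v)

theorem dirDeriv_const_mul (v : E) (c : ℝ) (f : E → ℝ) :
    dirDeriv v (fun p => c * f p) = fun p => c * dirDeriv v f p :=
  funext fun p => congr($(congrFun (fderiv_const_smul_field (f := f) c) p) v)

theorem dirDeriv_dirDeriv_rescale (v : E) {c : ℝ} (hc : c ≠ 0) (f : E → ℝ) :
    dirDeriv v (dirDeriv v fun p => (c ^ 2)⁻¹ * f (c • p)) =
      fun p => dirDeriv v (dirDeriv v f) (c • p) := by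
  simp only [dirDeriv_const_mul, dirDeriv_comp_smul]
  funext p
  field_simp

end DirDeriv

section SmoothFunctions

variable {Ω : Set (ℝ × ℝ)} {P Q : (ℝ × ℝ → ℝ) → ℝ × ℝ → ℝ}

theorem IsTest.dirDeriv {φ : ℝ × ℝ → ℝ} (hφ : IsTest φ) (v : ℝ × ℝ) : IsTest (dirDeriv v φ) :=
  ⟨contDiff_dirDeriv v hφ.1,
    hφ.2.of_isClosed_subset (isClosed_tsupport _) (tsupport_dirDeriv_subset v φ)⟩

theorem IsTest.integrable_mul {f φ : ℝ × ℝ → ℝ} (hφ : IsTest φ) (hf : Continuous f) :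
    Integrable fun p => f p * φ p :=
  (hf.mul hφ.1.continuous).integrable_of_hasCompactSupport hφ.2.mul_left

theorem integral_mul_dirDeriv (v : ℝ × ℝ) {f φ : ℝ × ℝ → ℝ} (hf : ContDiff ℝ (⊤ : ℕ∞) f)
    (hφ : IsTest φ) : ∫ p, f p * dirDeriv v φ p = -∫ p, dirDeriv v f p * φ p :=
  integral_mul_fderiv_eq_neg_fderiv_mul_of_integrable
    (hφ.integrable_mul (contDiff_dirDeriv v hf).continuous)
    ((hφ.dirDeriv v).integrable_mul hf.continuous) (hφ.integrable_mul hf.continuous)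
    (fun p _ => hf.differentiable (by simp) p) (fun p _ => hφ.1.differentiable (by simp) p)

theorem integrableOn_of_isBounded {X F : Type*} [MetricSpace X] [ProperSpace X]
    [MeasurableSpace X] [OpensMeasurableSpace X] {μ : Measure X} [IsFiniteMeasureOnCompacts μ]
    [NormedAddCommGroup F] {f : X → F} (hf : Continuous f) {s : Set X}
    (hs : Bornology.IsBounded s) : IntegrableOn f s μ :=
  hf.continuousOn.integrableOn_compact hs.isCompact_closure |>.mono_set subset_closure

theorem hasWeakImage_dirDeriv_dirDeriv (hΩ : Bornology.IsBounded Ω) {f : ℝ × ℝ → ℝ}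
    (hf : ContDiff ℝ (⊤ : ℕ∞) f) (v : ℝ × ℝ) :
    HasWeakImage (fun φ => dirDeriv v (dirDeriv v φ)) Ω f (dirDeriv v (dirDeriv v f)) := by
  have f'_smooth := contDiff_dirDeriv v hf
  refine ⟨integrableOn_of_isBounded (contDiff_dirDeriv v f'_smooth).continuous hΩ,
    fun φ hφ φ_sub => ?_⟩
  have φ'_sub := (tsupport_dirDeriv_subset v φ).trans φ_sub
  calc ∫ p in Ω, dirDeriv v (dirDeriv v f) p * φ p
      = ∫ p, dirDeriv v (dirDeriv v f) p * φ p :=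
        setIntegral_mul_eq_integral_of_tsupport_subset φ_sub
    _ = ∫ p, f p * dirDeriv v (dirDeriv v φ) p := by
      rw [integral_mul_dirDeriv v hf (hφ.dirDeriv v), integral_mul_dirDeriv v f'_smooth hφ, neg_neg]
    _ = ∫ p in Ω, f p * dirDeriv v (dirDeriv v φ) p :=
      (setIntegral_mul_eq_integral_of_tsupport_subset
        ((tsupport_dirDeriv_subset v _).trans φ'_sub)).symm

theorem HasWeakImage.add {f g h : ℝ × ℝ → ℝ} (hf : Continuous f)
    (hP : ∀ φ, IsTest φ → IsTest (P φ)) (hQ : ∀ φ, IsTest φ → IsTest (Q φ))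
    (hg : HasWeakImage P Ω f g) (hh : HasWeakImage Q Ω f h) :
    HasWeakImage (fun φ p => P φ p + Q φ p) Ω f fun p => g p + h p := by
  refine ⟨hg.1.add hh.1, fun φ hφ φ_sub => ?_⟩
  have φ_memLp := hφ.memLp_top (volume.restrict Ω)
  have g_integrable : IntegrableOn (fun p => g p * φ p) Ω := hg.1.mul_of_top_left φ_memLp
  have h_integrable : IntegrableOn (fun p => h p * φ p) Ω := hh.1.mul_of_top_left φ_memLp
  simp only [add_mul, mul_add]
  rw [integral_add g_integrable h_integrable,
    integral_add ((hP φ hφ).integrable_mul hf).integrableOn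
      ((hQ φ hφ).integrable_mul hf).integrableOn, hg.2 φ hφ φ_sub, hh.2 φ hφ φ_sub]

end SmoothFunctions

section Laplacian

/-- The Laplacian `∂_x² f + ∂_y² f` on `ℝ²`. Mathlib's Laplacian lives on inner product spaces,
which `ℝ × ℝ` with its supremum norm is not. -/
def planeLaplacian (f : ℝ × ℝ → ℝ) (p : ℝ × ℝ) : ℝ := pd1 (pd1 f) p + pd2 (pd2 f) p

variable {f : ℝ × ℝ → ℝ}

theorem continuous_pd1_pd1 (hf : ContDiff ℝ (⊤ : ℕ∞) f) : Continuous (pd1 (pd1 f)) :=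
  (contDiff_dirDeriv _ (contDiff_dirDeriv _ hf)).continuous

theorem continuous_planeLaplacian (hf : ContDiff ℝ (⊤ : ℕ∞) f) : Continuous (planeLaplacian f) :=
  (continuous_pd1_pd1 hf).add (contDiff_dirDeriv _ (contDiff_dirDeriv _ hf)).continuous

theorem IsTest.pd1_pd1 (hf : IsTest f) : IsTest (pd1 (pd1 f)) := (hf.dirDeriv _).dirDeriv _

theorem IsTest.pd2_pd2 (hf : IsTest f) : IsTest (pd2 (pd2 f)) := (hf.dirDeriv _).dirDeriv _

theorem IsTest.planeLaplacian (hf : IsTest f) : IsTest (planeLaplacian f) :=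
  ⟨hf.pd1_pd1.1.add hf.pd2_pd2.1, hf.pd1_pd1.2.add hf.pd2_pd2.2⟩

theorem hasWeakImage_planeLaplacian {Ω : Set (ℝ × ℝ)} (hΩ : Bornology.IsBounded Ω)
    (hf : ContDiff ℝ (⊤ : ℕ∞) f) : HasWeakImage planeLaplacian Ω f (planeLaplacian f) :=
  (hasWeakImage_dirDeriv_dirDeriv hΩ hf (1, 0)).add hf.continuous (fun _ => IsTest.pd1_pd1)
    (fun _ => IsTest.pd2_pd2) (hasWeakImage_dirDeriv_dirDeriv hΩ hf (0, 1))

theorem pd1_eq_of_hasDerivAt {p : ℝ × ℝ} {d : ℝ} (hf : DifferentiableAt ℝ f p)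
    (h : HasDerivAt (fun x => f (x, p.2)) d p.1) : pd1 f p = d := by
  have line_deriv : HasDerivAt (fun x : ℝ => (x, p.2)) (1, 0) p.1 :=
    (hasDerivAt_id p.1).prodMk (hasDerivAt_const p.1 p.2)
  exact (hf.hasFDerivAt.comp_hasDerivAt p.1 line_deriv).unique h

theorem pd2_comp_swap (f : ℝ × ℝ → ℝ) : pd2 (f ∘ Prod.swap) = pd1 f ∘ Prod.swap :=
  funext fun _ => congr($(ContinuousLinearEquiv.comp_right_fderiv
    (.prodComm ℝ ℝ ℝ) (f := f)) ((0, 1) : ℝ × ℝ))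

theorem pd2_pd2_eq_pd1_pd1_swap (hf : f ∘ Prod.swap = f) (p : ℝ × ℝ) :
    pd2 (pd2 f) p = pd1 (pd1 f) p.swap := by
  nth_rw 1 [← hf]
  rw [pd2_comp_swap, pd2_comp_swap, Function.comp_apply]

theorem isOpen_uball : IsOpen uball := isOpen_lt (by fun_prop) continuous_const

theorem uball_subset_Icc_prod_Icc : uball ⊆ Set.Icc (-1) 1 ×ˢ Set.Icc (-1) 1 := fun p hp =>
  ⟨abs_le.1 <| sq_le_one_iff_abs_le_one _ |>.1 <| by nlinarith [hp.out, sq_nonneg p.2],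
    abs_le.1 <| sq_le_one_iff_abs_le_one _ |>.1 <| by nlinarith [hp.out, sq_nonneg p.1]⟩

theorem isBounded_uball : Bornology.IsBounded uball :=
  ((Metric.isBounded_Icc _ _).prod (Metric.isBounded_Icc _ _)).subset uball_subset_Icc_prod_Icc

theorem Icc_prod_Icc_subset_uball :
    Set.Icc (-(1 / 2)) (1 / 2) ×ˢ Set.Icc (-(1 / 2)) (1 / 2) ⊆ uball := by
  rintro ⟨x, y⟩ ⟨⟨hx, hx'⟩, hy, hy'⟩
  change x ^ 2 + y ^ 2 < 1
  nlinarith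

instance : IsFiniteMeasure (volume.restrict uball) :=
  ⟨by simpa using isBounded_uball.measure_lt_top⟩

end Laplacian

/-- Periodicity with period `T` in each of the two coordinates. -/
def DoublyPeriodic {F : Type*} (T : ℝ) (G : ℝ × ℝ → F) : Prop :=
  Function.Periodic G (T, 0) ∧ Function.Periodic G (0, T)

namespace DoublyPeriodic

variable {F : Type*} {T : ℝ} {G : ℝ × ℝ → F}

theorem comp {F' : Type*} (hG : DoublyPeriodic T G) (g : F → F') : DoublyPeriodic T (g ∘ G) :=
  ⟨hG.1.comp g, hG.2.comp g⟩

theorem periodic_left (hG : DoublyPeriodic T G) (y : ℝ) :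
    Function.Periodic (fun x => G (x, y)) T := fun x => by
  simpa using hG.1 (x, y)

theorem periodic_right (hG : DoublyPeriodic T G) (x : ℝ) :
    Function.Periodic (fun y => G (x, y)) T := fun y => by
  simpa using hG.2 (x, y)

theorem fderiv [NormedAddCommGroup F] [NormedSpace ℝ F] (hG : DoublyPeriodic T G) :
    DoublyPeriodic T (fderiv ℝ G) := by
  refine ⟨fun p => ?_, fun p => ?_⟩ <;> rw [← fderiv_comp_add_right]
  exacts [congr(_root_.fderiv ℝ $(funext hG.1) p), congr(_root_.fderiv ℝ $(funext hG.2) p)]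

theorem dirDeriv {f : ℝ × ℝ → ℝ} (hf : DoublyPeriodic T f) (v : ℝ × ℝ) :
    DoublyPeriodic T (dirDeriv v f) :=
  hf.fderiv.comp fun L => L v

theorem add [Add F] {G' : ℝ × ℝ → F} (hG : DoublyPeriodic T G) (hG' : DoublyPeriodic T G') :
    DoublyPeriodic T fun p => G p + G' p :=
  ⟨hG.1.add hG'.1, hG.2.add hG'.2⟩

theorem exists_norm_le [SeminormedAddCommGroup F] (hT : 0 < T) (hG : DoublyPeriodic T G)
    (hG_cont : Continuous G) : ∃ C : ℝ, ∀ p, ‖G p‖ ≤ C := by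
  obtain ⟨C, hC⟩ := (isCompact_Icc.prod isCompact_Icc).exists_bound_of_continuousOn
    (s := Set.Icc 0 T ×ˢ Set.Icc 0 T) hG_cont.continuousOn
  refine ⟨C, fun ⟨x, y⟩ => ?_⟩
  obtain ⟨x', hx', G_x'⟩ := (hG.periodic_left y).exists_mem_Ico₀ hT x
  obtain ⟨y', hy', G_y'⟩ := (hG.periodic_right x').exists_mem_Ico₀ hT y
  exact (congrArg norm (G_x'.trans G_y')).trans_le
    (hC _ ⟨Set.Ico_subset_Icc_self hx', Set.Ico_subset_Icc_self hy'⟩)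

theorem exists_lipschitzWith [NormedAddCommGroup F] [NormedSpace ℝ F] (hT : 0 < T)
    (hG : DoublyPeriodic T G) (hG_smooth : ContDiff ℝ 1 G) : ∃ K, LipschitzWith K G := by
  obtain ⟨K, hK⟩ := hG.fderiv.exists_norm_le hT (hG_smooth.continuous_fderiv one_ne_zero)
  exact ⟨K.toNNReal, lipschitzWith_of_nnnorm_fderiv_le (hG_smooth.differentiable one_ne_zero)
    fun p => NNReal.coe_le_coe.1 ((hK p).trans (Real.le_coe_toNNReal K))⟩

theorem exists_rescale_le_one {f : ℝ × ℝ → ℝ} (hT : 0 < T) (hf : DoublyPeriodic T f)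
    (hf_smooth : ContDiff ℝ 1 f) : ∃ k : ℕ, k ≠ 0 ∧
      (∀ p, |((k * T) ^ 2)⁻¹ * f ((k * T) • p)| ≤ 1) ∧
      LipschitzWith 1 fun p => ((k * T) ^ 2)⁻¹ * f ((k * T) • p) := by
  obtain ⟨C, hC⟩ := hf.exists_norm_le hT hf_smooth.continuous
  obtain ⟨K, hK⟩ := hf.exists_lipschitzWith hT hf_smooth
  obtain ⟨k, hk⟩ := exists_nat_ge (max 1 (max C K) / T)
  rw [div_le_iff₀ hT, max_le_iff, max_le_iff] at hk
  obtain ⟨one_le, C_le, K_le⟩ := hk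
  have c_pos : 0 < k * T := one_pos.trans_le one_le
  refine ⟨k, fun hk => by simp [hk] at c_pos, fun p => ?_, LipschitzWith.of_dist_le_mul ?_⟩
  · rw [abs_mul, abs_of_pos (by positivity), inv_mul_le_iff₀ (by positivity), mul_one]
    calc |f ((k * T) • p)| ≤ k * T := (hC _).trans C_le
      _ ≤ (k * T) ^ 2 := le_self_pow₀ one_le two_ne_zero
  · intro p q
    rw [Real.dist_eq, ← mul_sub, abs_mul, abs_of_pos (by positivity), NNReal.coe_one, one_mul,
      inv_mul_le_iff₀ (by positivity), ← Real.dist_eq]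
    calc dist (f ((k * T) • p)) (f ((k * T) • q)) ≤ K * (k * T * dist p q) := by
          simpa only [dist_smul₀, Real.norm_of_nonneg c_pos.le] using
            hK.dist_le_mul ((k * T) • p) ((k * T) • q)
      _ ≤ k * T * (k * T * dist p q) := by gcongr
      _ = (k * T) ^ 2 * dist p q := by ring

end DoublyPeriodic

theorem intervalIntegral_comp_mul_of_periodic {g : ℝ → ℝ} {T : ℝ} (hT : T ≠ 0)
    (hg : Function.Periodic g T) (hg_cont : Continuous g) {k : ℕ} (hk : k ≠ 0) (m : ℕ) (a b : ℝ) :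
    ∫ x in a..a + m, g (k * T * x) = m / T * ∫ x in b..b + T, g x := by
  have hk' : (k : ℝ) ≠ 0 := Nat.cast_ne_zero.2 hk
  have endpoint_eq : k * T * (a + m) = k * T * a + ((k * m : ℕ) : ℤ) • T := by
    rw [zsmul_eq_mul]; push_cast; ring
  rw [intervalIntegral.integral_comp_mul_left _ (mul_ne_zero hk' hT), endpoint_eq,
    hg.intervalIntegral_add_zsmul_eq _ _ fun _ _ => hg_cont.intervalIntegrable _ _,
    hg.intervalIntegral_add_eq _ b, zsmul_eq_mul, smul_eq_mul]
  push_cast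
  field_simp

theorem setIntegral_Icc_prod_Icc {F : Type*} [NormedAddCommGroup F] [NormedSpace ℝ F]
    {G : ℝ × ℝ → F} (hG : Continuous G) {a b c d : ℝ} (hab : a ≤ b) (hcd : c ≤ d) :
    ∫ p in Set.Icc a b ×ˢ Set.Icc c d, G p = ∫ x in a..b, ∫ y in c..d, G (x, y) := by
  simp only [intervalIntegral.integral_of_le hab, intervalIntegral.integral_of_le hcd,
    ← integral_Icc_eq_integral_Ioc]
  exact setIntegral_prod _ <|
    integrableOn_of_isBounded hG (isCompact_Icc.prod isCompact_Icc).isBounded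

theorem setIntegral_comp_smul_of_doublyPeriodic {G : ℝ × ℝ → ℝ} {T : ℝ} (hT : 0 < T)
    (hG : DoublyPeriodic T G) (hG_cont : Continuous G) {k : ℕ} (hk : k ≠ 0) (m : ℕ) (a b : ℝ) :
    ∫ p in Set.Icc a (a + m) ×ˢ Set.Icc a (a + m), G ((k * T) • p) =
      (m / T) ^ 2 * ∫ p in Set.Icc b (b + T) ×ˢ Set.Icc b (b + T), G p := by
  have inner_cont : Continuous fun x => ∫ y in b..b + T, G (x, y) :=
    intervalIntegral.continuous_parametric_intervalIntegral_of_continuous'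
      (f := fun x y => G (x, y)) hG_cont _ _
  have inner_periodic : Function.Periodic (fun x => ∫ y in b..b + T, G (x, y)) T := fun x => by
    simp only [hG.periodic_left _ x]
  have a_le : a ≤ a + m := le_add_of_nonneg_right m.cast_nonneg
  have b_le : b ≤ b + T := le_add_of_nonneg_right hT.le
  calc ∫ p in Set.Icc a (a + m) ×ˢ Set.Icc a (a + m), G ((k * T) • p)
      = ∫ x in a..a + m, ∫ y in a..a + m, G (k * T * x, k * T * y) :=
        setIntegral_Icc_prod_Icc (hG_cont.comp (continuous_const_smul _)) a_le a_le
    _ = ∫ x in a..a + m, m / T * ∫ y in b..b + T, G (k * T * x, y) := by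
        congr! 2 with x
        exact intervalIntegral_comp_mul_of_periodic hT.ne' (hG.periodic_right _)
          (hG_cont.comp (.prodMk_right _)) hk m a b
    _ = m / T * (m / T * ∫ x in b..b + T, ∫ y in b..b + T, G (x, y)) := by
        rw [intervalIntegral.integral_const_mul,
          intervalIntegral_comp_mul_of_periodic hT.ne' inner_periodic inner_cont hk m a b]
    _ = (m / T) ^ 2 * ∫ p in Set.Icc b (b + T) ×ˢ Set.Icc b (b + T), G p := by
        rw [setIntegral_Icc_prod_Icc hG_cont b_le b_le, sq, mul_assoc]

section TorusPotential

/-- The regularization `η² + (1 - cos x) + (1 - cos y)` of half the squared distance to the lattice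
`(2πℤ)²`. -/
def latticeGap (η : ℝ) (p : ℝ × ℝ) : ℝ := η ^ 2 + (1 - cos p.1) + (1 - cos p.2)

/-- A smooth doubly periodic substitute for the logarithmic potential `log (x² + y²)`, whose
singularities at the lattice points are recovered as `η → 0`. -/
def torusPotential (η : ℝ) (p : ℝ × ℝ) : ℝ := log (latticeGap η p)

/-- A `2π`-periodic analogue of the Poisson kernel `η / (η² + x²)`: its mass stays bounded as
`η → 0`. -/
def periodicPoisson (η x : ℝ) : ℝ := η / (η ^ 2 + (1 - cos x))

variable {η : ℝ}

theorem latticeGap_pos (hη : 0 < η) (p : ℝ × ℝ) : 0 < latticeGap η p := by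
  have := cos_le_one p.1
  have := cos_le_one p.2
  have : 0 < η ^ 2 := by positivity
  unfold latticeGap
  linarith

theorem contDiff_torusPotential (hη : 0 < η) : ContDiff ℝ (⊤ : ℕ∞) (torusPotential η) :=
  ContDiff.log (by unfold latticeGap; fun_prop) fun p => (latticeGap_pos hη p).ne'

theorem doublyPeriodic_torusPotential (η : ℝ) : DoublyPeriodic (2 * π) (torusPotential η) :=
  ⟨fun p => by simp [torusPotential, latticeGap], fun p => by simp [torusPotential, latticeGap]⟩

theorem torusPotential_comp_swap (η : ℝ) : torusPotential η ∘ Prod.swap = torusPotential η :=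
  funext fun _ => congrArg log (add_right_comm _ _ _)

theorem hasDerivAt_latticeGap (η : ℝ) (p : ℝ × ℝ) :
    HasDerivAt (fun x => latticeGap η (x, p.2)) (sin p.1) p.1 := by
  simpa [latticeGap] using
    (((hasDerivAt_cos p.1).const_sub 1).const_add (η ^ 2)).add_const (1 - cos p.2)

theorem pd1_torusPotential (hη : 0 < η) :
    pd1 (torusPotential η) = fun p => sin p.1 / latticeGap η p := by
  funext p
  refine pd1_eq_of_hasDerivAt ((contDiff_torusPotential hη).differentiable (by simp) p) ?_
  exact (hasDerivAt_latticeGap η p).log (latticeGap_pos hη p).ne'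

theorem pd1_pd1_torusPotential (hη : 0 < η) (p : ℝ × ℝ) :
    pd1 (pd1 (torusPotential η)) p =
      (cos p.1 * (η ^ 2 + (1 - cos p.2)) - (1 - cos p.1)) / latticeGap η p ^ 2 := by
  have pd1_smooth := contDiff_dirDeriv (1, 0) (contDiff_torusPotential hη)
  refine pd1_eq_of_hasDerivAt (pd1_smooth.differentiable (by simp) p) ?_
  rw [pd1_torusPotential hη]
  refine ((hasDerivAt_sin p.1).fun_div (hasDerivAt_latticeGap η p)
    (latticeGap_pos hη p).ne').congr_deriv ?_
  congr 1
  simp only [latticeGap]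
  linear_combination -sin_sq_add_cos_sq p.1

theorem planeLaplacian_torusPotential (hη : 0 < η) (p : ℝ × ℝ) :
    planeLaplacian (torusPotential η) p =
      (2 * η ^ 2 + η ^ 2 * latticeGap η p + (1 - cos p.1) ^ 2 + (1 - cos p.2) ^ 2) /
        latticeGap η p ^ 2 - 1 := by
  have gap_pos := latticeGap_pos hη p
  have gap_swap : latticeGap η p.swap = latticeGap η p := add_right_comm _ _ _
  rw [planeLaplacian, pd2_pd2_eq_pd1_pd1_swap (torusPotential_comp_swap η),
    pd1_pd1_torusPotential hη, pd1_pd1_torusPotential hη, gap_swap, ← add_div,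
    eq_sub_iff_add_eq, div_add_one (by positivity)]
  congr 1
  simp only [latticeGap, Prod.fst_swap, Prod.snd_swap]
  ring

theorem periodicPoisson_nonneg (hη : 0 < η) (x : ℝ) : 0 ≤ periodicPoisson η x :=
  div_nonneg hη.le (add_nonneg (sq_nonneg η) (sub_nonneg.2 (cos_le_one x)))

theorem continuous_periodicPoisson (hη : 0 < η) : Continuous (periodicPoisson η) :=
  continuous_const.div (by fun_prop) fun x => by
    have := cos_le_one x
    have : 0 < η ^ 2 := by positivity
    linarith

theorem sq_div_latticeGap_sq_le (hη : 0 < η) (p : ℝ × ℝ) :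
    η ^ 2 / latticeGap η p ^ 2 ≤ periodicPoisson η p.1 * periodicPoisson η p.2 := by
  have hη2 : 0 < η ^ 2 := by positivity
  have hs : 0 ≤ 1 - cos p.1 := sub_nonneg.2 (cos_le_one _)
  have ht : 0 ≤ 1 - cos p.2 := sub_nonneg.2 (cos_le_one _)
  rw [periodicPoisson, periodicPoisson, div_mul_div_comm, ← sq, latticeGap, sq (_ + _ + _)]
  exact div_le_div_of_nonneg_left hη2.le (by positivity) <|
    mul_le_mul (by linarith) (by linarith) (by positivity) (by positivity)

theorem abs_planeLaplacian_torusPotential_le (hη : 0 < η) (p : ℝ × ℝ) :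
    |planeLaplacian (torusPotential η) p| ≤
      2 * (periodicPoisson η p.1 * periodicPoisson η p.2) + 2 := by
  have hη2 : 0 < η ^ 2 := by positivity
  have hs : 0 ≤ 1 - cos p.1 := sub_nonneg.2 (cos_le_one _)
  have ht : 0 ≤ 1 - cos p.2 := sub_nonneg.2 (cos_le_one _)
  have gap_pos := latticeGap_pos hη p
  have main_le : (2 * η ^ 2 + η ^ 2 * latticeGap η p + (1 - cos p.1) ^ 2 + (1 - cos p.2) ^ 2) /
      latticeGap η p ^ 2 ≤ 2 * (η ^ 2 / latticeGap η p ^ 2) + 1 := by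
    rw [← mul_div_assoc, div_add_one (by positivity)]
    refine div_le_div_of_nonneg_right ?_ (sq_nonneg _)
    rw [latticeGap]
    nlinarith [mul_nonneg hs ht, mul_nonneg hη2.le hs, mul_nonneg hη2.le ht]
  have main_nonneg : 0 ≤ (2 * η ^ 2 + η ^ 2 * latticeGap η p + (1 - cos p.1) ^ 2 +
      (1 - cos p.2) ^ 2) / latticeGap η p ^ 2 := by positivity
  have poisson_le := sq_div_latticeGap_sq_le hη p
  have poisson_nonneg := mul_nonneg (periodicPoisson_nonneg hη p.1) (periodicPoisson_nonneg hη p.2)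
  rw [planeLaplacian_torusPotential hη, abs_le]
  constructor <;> linarith

theorem sq_div_five_le_one_sub_cos {x : ℝ} (hx : |x| ≤ π) : x ^ 2 / 5 ≤ 1 - cos x := by
  have one_fifth_le : 1 / 5 ≤ 2 / π ^ 2 := by
    rw [div_le_div_iff₀ (by norm_num) (by positivity)]
    nlinarith [pi_lt_d2, pi_pos]
  nlinarith [cos_le_one_sub_mul_cos_sq hx, mul_le_mul_of_nonneg_right one_fifth_le (sq_nonneg x)]

theorem integral_periodicPoisson_le (hη : 0 < η) : ∫ x in -π..π, periodicPoisson η x ≤ 3 * π := by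
  have kernel_cont : Continuous fun x : ℝ => η / (η ^ 2 + x ^ 2 / 9) :=
    continuous_const.div (by fun_prop) fun x => by positivity
  have arctan_deriv (x : ℝ) :
      HasDerivAt (fun x => 3 * arctan (x / (3 * η))) (η / (η ^ 2 + x ^ 2 / 9)) x := by
    refine (((hasDerivAt_id x).div_const (3 * η)).arctan.const_mul 3).congr_deriv ?_
    simp only [id_eq]
    field_simp
    ring
  calc ∫ x in -π..π, periodicPoisson η x ≤ ∫ x in -π..π, η / (η ^ 2 + x ^ 2 / 9) := by
        refine intervalIntegral.integral_mono_on (neg_le_self pi_pos.le)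
          ((continuous_periodicPoisson hη).intervalIntegrable _ _)
          (kernel_cont.intervalIntegrable _ _) fun x hx => ?_
        have one_sub_cos_ge := sq_div_five_le_one_sub_cos (abs_le.2 hx)
        unfold periodicPoisson
        gcongr
        linarith [sq_nonneg x]
    _ = 3 * arctan (π / (3 * η)) - 3 * arctan (-π / (3 * η)) :=
        intervalIntegral.integral_eq_sub_of_hasDerivAt (fun x _ => arctan_deriv x)
          (kernel_cont.intervalIntegrable _ _)
    _ ≤ 3 * π := by
        linarith [arctan_lt_pi_div_two (π / (3 * η)), neg_pi_div_two_lt_arctan (-π / (3 * η))]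

/-- The closed fundamental domain `[-π, π]²` of the lattice `(2πℤ)²`. -/
def periodCell : Set (ℝ × ℝ) := Set.Icc (-π) π ×ˢ Set.Icc (-π) π

theorem isBounded_periodCell : Bornology.IsBounded periodCell :=
  (isCompact_Icc.prod isCompact_Icc).isBounded

theorem setIntegral_periodCell {G : ℝ × ℝ → ℝ} (hG : Continuous G) :
    ∫ p in periodCell, G p = ∫ x in -π..π, ∫ y in -π..π, G (x, y) :=
  setIntegral_Icc_prod_Icc hG (neg_le_self pi_pos.le) (neg_le_self pi_pos.le)

theorem setIntegral_abs_planeLaplacian_torusPotential_le (hη : 0 < η) :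
    ∫ p in periodCell, |planeLaplacian (torusPotential η) p| ≤ 26 * π ^ 2 := by
  have laplacian_cont := (continuous_planeLaplacian (contDiff_torusPotential hη)).abs
  have poisson_cont := continuous_periodicPoisson hη
  have bound_cont : Continuous fun p : ℝ × ℝ =>
      2 * (periodicPoisson η p.1 * periodicPoisson η p.2) + 2 := by fun_prop
  have mass_nonneg : 0 ≤ ∫ x in -π..π, periodicPoisson η x :=
    intervalIntegral.integral_nonneg (neg_le_self pi_pos.le) fun x _ => periodicPoisson_nonneg hη x
  calc ∫ p in periodCell, |planeLaplacian (torusPotential η) p|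
      ≤ ∫ p in periodCell, (2 * (periodicPoisson η p.1 * periodicPoisson η p.2) + 2) :=
        integral_mono (integrableOn_of_isBounded laplacian_cont isBounded_periodCell)
          (integrableOn_of_isBounded bound_cont isBounded_periodCell)
          (abs_planeLaplacian_torusPotential_le hη)
    _ = 2 * (∫ x in -π..π, periodicPoisson η x) ^ 2 + 8 * π ^ 2 := by
        have inner (x : ℝ) :
            ∫ y in -π..π, (2 * (periodicPoisson η x * periodicPoisson η y) + 2) =
              periodicPoisson η x * (2 * ∫ y in -π..π, periodicPoisson η y) + 4 * π := by
          rw [intervalIntegral.integral_add (by apply Continuous.intervalIntegrable; fun_prop)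
            (by simp), intervalIntegral.integral_const_mul, intervalIntegral.integral_const_mul,
            intervalIntegral.integral_const, smul_eq_mul]
          ring
        rw [setIntegral_periodCell bound_cont]
        simp only [inner]
        rw [intervalIntegral.integral_add (by apply Continuous.intervalIntegrable; fun_prop)
          (by simp), intervalIntegral.integral_mul_const, intervalIntegral.integral_const,
          smul_eq_mul]
        ring
    _ ≤ 2 * (3 * π) ^ 2 + 8 * π ^ 2 := by gcongr; exact integral_periodicPoisson_le hη
    _ = 26 * π ^ 2 := by ring

theorem inv_sq_le_abs_pd1_pd1_torusPotential (hη : 0 < η) {x y : ℝ} (hx : 4 * η ≤ x) (hx1 : x ≤ 1)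
    (hy : 0 ≤ y) (hyx : y ≤ x / 4) :
    1 / (10 * x ^ 2) ≤ |pd1 (pd1 (torusPotential η)) (x, y)| := by
  have x_pos : 0 < x := by linarith
  have hs : x ^ 2 / 5 ≤ 1 - cos x :=
    sq_div_five_le_one_sub_cos (abs_le.2 ⟨by linarith [pi_pos], by linarith [pi_gt_three]⟩)
  have hs' : 1 - cos x ≤ x ^ 2 / 2 := by linarith [one_sub_sq_div_two_le_cos (x := x)]
  have ht : 0 ≤ 1 - cos y := sub_nonneg.2 (cos_le_one _)
  have ht' : 1 - cos y ≤ x ^ 2 / 32 := by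
    nlinarith [one_sub_sq_div_two_le_cos (x := y)]
  have η_sq_le : η ^ 2 ≤ x ^ 2 / 16 := by nlinarith
  have gap_pos := latticeGap_pos hη (x, y)
  have gap_le : latticeGap η (x, y) ≤ x ^ 2 := by
    simp only [latticeGap]
    linarith
  have numerator_le :
      x ^ 2 / 10 ≤ 1 - cos x - cos x * (η ^ 2 + (1 - cos y)) := by
    nlinarith [sq_nonneg η, cos_le_one x]
  calc 1 / (10 * x ^ 2) = x ^ 2 / 10 / (x ^ 2) ^ 2 := by field_simp
    _ ≤ (1 - cos x - cos x * (η ^ 2 + (1 - cos y))) / latticeGap η (x, y) ^ 2 := by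
      gcongr
      exact (by positivity : 0 ≤ x ^ 2 / 10).trans numerator_le
    _ = -pd1 (pd1 (torusPotential η)) (x, y) := by
      rw [pd1_pd1_torusPotential hη, ← neg_div, neg_sub]
    _ ≤ |pd1 (pd1 (torusPotential η)) (x, y)| := neg_le_abs _

theorem inv_le_integral_abs_pd1_pd1_torusPotential (hη : 0 < η) {x : ℝ} (hx : 4 * η ≤ x)
    (hx1 : x ≤ 1) : 1 / 40 * x⁻¹ ≤ ∫ y in -π..π, |pd1 (pd1 (torusPotential η)) (x, y)| := by
  have x_pos : 0 < x := by linarith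
  have slice_cont : Continuous fun y => |pd1 (pd1 (torusPotential η)) (x, y)| :=
    (continuous_pd1_pd1 (contDiff_torusPotential hη)).abs.comp (.prodMk_right x)
  calc 1 / 40 * x⁻¹ = ∫ y in 0..x / 4, 1 / (10 * x ^ 2) := by
        rw [intervalIntegral.integral_const, smul_eq_mul]
        field_simp
        ring
    _ ≤ ∫ y in 0..x / 4, |pd1 (pd1 (torusPotential η)) (x, y)| :=
        intervalIntegral.integral_mono_on (by positivity) (by simp)
          (slice_cont.intervalIntegrable _ _)
          fun y hy => inv_sq_le_abs_pd1_pd1_torusPotential hη hx hx1 hy.1 hy.2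
    _ ≤ ∫ y in -π..π, |pd1 (pd1 (torusPotential η)) (x, y)| :=
        intervalIntegral.integral_mono_interval (by linarith [pi_pos]) (by positivity)
          (by linarith [pi_gt_three]) (ae_of_all _ fun _ => abs_nonneg _)
          (slice_cont.intervalIntegrable _ _)

theorem log_le_setIntegral_abs_pd1_pd1_torusPotential (hη : 0 < η) (hη4 : 4 * η ≤ 1) :
    log (1 / (4 * η)) / 40 ≤ ∫ p in periodCell, |pd1 (pd1 (torusPotential η)) p| := by
  have deriv_cont := (continuous_pd1_pd1 (contDiff_torusPotential hη)).abs
  let inner (x : ℝ) : ℝ := ∫ y in -π..π, |pd1 (pd1 (torusPotential η)) (x, y)|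
  have inner_cont : Continuous inner :=
    intervalIntegral.continuous_parametric_intervalIntegral_of_continuous'
      (f := fun x y => |pd1 (pd1 (torusPotential η)) (x, y)|) deriv_cont _ _
  have inner_nonneg (x : ℝ) : 0 ≤ inner x :=
    intervalIntegral.integral_nonneg (neg_le_self pi_pos.le) fun _ _ => abs_nonneg _
  have zero_notMem : (0 : ℝ) ∉ Set.uIcc (4 * η) 1 :=
    Set.notMem_uIcc_of_lt (by positivity) one_pos
  calc log (1 / (4 * η)) / 40 = ∫ x in 4 * η..1, 1 / 40 * x⁻¹ := by
        rw [intervalIntegral.integral_const_mul, integral_inv_of_pos (by positivity) one_pos]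
        ring
    _ ≤ ∫ x in 4 * η..1, inner x :=
        intervalIntegral.integral_mono_on hη4
          (intervalIntegral.intervalIntegrable_inv
            (fun x hx => ne_of_mem_of_not_mem hx zero_notMem) continuousOn_id |>.const_mul _)
          (inner_cont.intervalIntegrable _ _) fun _ hx =>
            inv_le_integral_abs_pd1_pd1_torusPotential hη hx.1 hx.2
    _ ≤ ∫ x in -π..π, inner x :=
        intervalIntegral.integral_mono_interval (by linarith [pi_pos]) hη4
          (by linarith [pi_gt_three]) (ae_of_all _ inner_nonneg)
          (inner_cont.intervalIntegrable _ _)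
    _ = ∫ p in periodCell, |pd1 (pd1 (torusPotential η)) p| :=
        (setIntegral_periodCell deriv_cont).symm

end TorusPotential

section Family

theorem setIntegral_uball_comp_smul_le {G : ℝ × ℝ → ℝ} (hG : DoublyPeriodic (2 * π) G)
    (hG_cont : Continuous G) (hG_nonneg : ∀ p, 0 ≤ G p) {k : ℕ} (hk : k ≠ 0) :
    ∫ p in uball, G ((k * (2 * π)) • p) ≤ (π ^ 2)⁻¹ * ∫ p in periodCell, G p := by
  have scaled_cont : Continuous fun p => G ((k * (2 * π)) • p) :=
    hG_cont.comp (continuous_const_smul _)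
  calc ∫ p in uball, G ((k * (2 * π)) • p)
      ≤ ∫ p in Set.Icc (-1) 1 ×ˢ Set.Icc (-1) 1, G ((k * (2 * π)) • p) :=
        setIntegral_mono_set (integrableOn_of_isBounded scaled_cont
          (isCompact_Icc.prod isCompact_Icc).isBounded) (ae_of_all _ fun _ => hG_nonneg _)
          uball_subset_Icc_prod_Icc.eventuallyLE
    _ = (π ^ 2)⁻¹ * ∫ p in periodCell, G p := by
        convert setIntegral_comp_smul_of_doublyPeriodic two_pi_pos hG hG_cont hk 2 (-1) (-π)
          using 3
        · norm_num
        · push_cast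
          field_simp
        · rw [periodCell]
          ring_nf

theorem le_setIntegral_uball_comp_smul {G : ℝ × ℝ → ℝ} (hG : DoublyPeriodic (2 * π) G)
    (hG_cont : Continuous G) (hG_nonneg : ∀ p, 0 ≤ G p) {k : ℕ} (hk : k ≠ 0) :
    ((2 * π) ^ 2)⁻¹ * ∫ p in periodCell, G p ≤ ∫ p in uball, G ((k * (2 * π)) • p) := by
  have scaled_cont : Continuous fun p => G ((k * (2 * π)) • p) :=
    hG_cont.comp (continuous_const_smul _)
  calc ((2 * π) ^ 2)⁻¹ * ∫ p in periodCell, G p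
      = ∫ p in Set.Icc (-(1 / 2)) (1 / 2) ×ˢ Set.Icc (-(1 / 2)) (1 / 2),
          G ((k * (2 * π)) • p) := by
        convert (setIntegral_comp_smul_of_doublyPeriodic two_pi_pos hG hG_cont hk 1 (-(1 / 2))
          (-π)).symm using 3
        · rw [Nat.cast_one, one_div, inv_pow]
        · rw [periodCell]
          ring_nf
        · norm_num
    _ ≤ ∫ p in uball, G ((k * (2 * π)) • p) :=
        setIntegral_mono_set (integrableOn_of_isBounded scaled_cont isBounded_uball)
          (ae_of_all _ fun _ => hG_nonneg _) Icc_prod_Icc_subset_uball.eventuallyLE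

theorem exists_rescale_uball {u : ℝ × ℝ → ℝ} (hu : ContDiff ℝ (⊤ : ℕ∞) u)
    (hu_per : DoublyPeriodic (2 * π) u) :
    ∃ w : ℝ × ℝ → ℝ, ContDiff ℝ (⊤ : ℕ∞) w ∧ (∀ p, |w p| ≤ 1) ∧ LipschitzWith 1 w ∧
      ∫ p in uball, |planeLaplacian w p| ≤ (π ^ 2)⁻¹ * ∫ p in periodCell, |planeLaplacian u p| ∧
      ((2 * π) ^ 2)⁻¹ * ∫ p in periodCell, |pd1 (pd1 u) p| ≤ ∫ p in uball, |pd1 (pd1 w) p| := by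
  obtain ⟨k, hk, w_le, w_lip⟩ :=
    hu_per.exists_rescale_le_one two_pi_pos (hu.of_le (by norm_cast))
  have c_ne : (k : ℝ) * (2 * π) ≠ 0 := mul_ne_zero (Nat.cast_ne_zero.2 hk) two_pi_pos.ne'
  set w := fun p => ((k * (2 * π)) ^ 2)⁻¹ * u ((k * (2 * π)) • p)
  have pd1_pd1_w : pd1 (pd1 w) = fun p => pd1 (pd1 u) ((k * (2 * π)) • p) :=
    dirDeriv_dirDeriv_rescale (1, 0) c_ne u
  have pd2_pd2_w : pd2 (pd2 w) = fun p => pd2 (pd2 u) ((k * (2 * π)) • p) :=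
    dirDeriv_dirDeriv_rescale (0, 1) c_ne u
  have pd1_pd1_periodic : DoublyPeriodic (2 * π) (pd1 (pd1 u)) :=
    (hu_per.dirDeriv (1, 0)).dirDeriv (1, 0)
  have laplacian_periodic : DoublyPeriodic (2 * π) (planeLaplacian u) :=
    pd1_pd1_periodic.add ((hu_per.dirDeriv (0, 1)).dirDeriv (0, 1))
  refine ⟨w, contDiff_const.mul (hu.comp (contDiff_const_smul _)), w_le, w_lip, ?_, ?_⟩
  · simp only [planeLaplacian, pd1_pd1_w, pd2_pd2_w]
    exact setIntegral_uball_comp_smul_le (laplacian_periodic.comp abs)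
      (continuous_planeLaplacian hu).abs (fun _ => abs_nonneg _) hk
  · rw [pd1_pd1_w]
    exact le_setIntegral_uball_comp_smul (pd1_pd1_periodic.comp abs)
      (continuous_pd1_pd1 hu).abs (fun _ => abs_nonneg _) hk

theorem exists_integral_planeLaplacian_le_and_le_integral_pd1_pd1 (R : ℝ) :
    ∃ w : ℝ × ℝ → ℝ, ContDiff ℝ (⊤ : ℕ∞) w ∧ (∀ p, |w p| ≤ 1) ∧ LipschitzWith 1 w ∧
      ∫ p in uball, |planeLaplacian w p| ≤ 26 ∧ R ≤ ∫ p in uball, |pd1 (pd1 w) p| := by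
  obtain ⟨η, hη, hη4, log_eq⟩ :
      ∃ η : ℝ, 0 < η ∧ 4 * η ≤ 1 ∧ log (1 / (4 * η)) = 40 * ((2 * π) ^ 2 * |R|) := by
    refine ⟨exp (-(40 * ((2 * π) ^ 2 * |R|))) / 4, by positivity, ?_, ?_⟩
    · rw [mul_div_cancel₀ _ four_ne_zero, exp_le_one_iff, neg_nonpos]
      positivity
    · rw [mul_div_cancel₀ _ four_ne_zero, one_div, log_inv, log_exp, neg_neg]
  obtain ⟨w, w_smooth, w_le, w_lip, laplacian_le, le_pd1_pd1⟩ :=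
    exists_rescale_uball (contDiff_torusPotential hη) (doublyPeriodic_torusPotential η)
  refine ⟨w, w_smooth, w_le, w_lip, laplacian_le.trans ?_, le_trans ?_ le_pd1_pd1⟩
  · rw [inv_mul_le_iff₀ (by positivity), mul_comm]
    exact setIntegral_abs_planeLaplacian_torusPotential_le hη
  · calc R ≤ |R| := le_abs_self R
      _ = ((2 * π) ^ 2)⁻¹ * (log (1 / (4 * η)) / 40) := by
          rw [log_eq]
          field_simp
      _ ≤ ((2 * π) ^ 2)⁻¹ * ∫ p in periodCell, |pd1 (pd1 (torusPotential η)) p| := by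
          gcongr
          exact log_le_setIntegral_abs_pd1_pd1_torusPotential hη hη4

end Family

/-- There exists a Lipschitz function `f` on the unit ball `B = B(0,1) ⊆ ℝ²` whose
distributional Laplacian is represented by a function in `L¹(B)`, while its distributional
second derivative `∂_x² f` is not represented by any function in `L¹(B)`. -/
theorem lipschitz_L1_laplacian_not_L1_second_derivative :
    ∃ f : ℝ × ℝ → ℝ, (∃ K : NNReal, LipschitzOnWith K f uball) ∧
      (∃ g : ℝ × ℝ → ℝ, IntegrableOn g uball ∧
        ∀ φ : ℝ × ℝ → ℝ, IsTest φ → tsupport φ ⊆ uball →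
          ∫ p in uball, g p * φ p =
            ∫ p in uball, f p * (pd1 (pd1 φ) p + pd2 (pd2 φ) p)) ∧
      ¬ (∃ h : ℝ × ℝ → ℝ, IntegrableOn h uball ∧
        ∀ φ : ℝ × ℝ → ℝ, IsTest φ → tsupport φ ⊆ uball →
          ∫ p in uball, h p * φ p = ∫ p in uball, f p * pd1 (pd1 φ) p) := by
  by_contra! no_example
  have second_deriv_of_laplacian (f : ℝ × ℝ → ℝ) (hf : ∃ K, LipschitzWith K f)
      (hg : ∃ g, HasWeakImage planeLaplacian uball f g) :
      ∃ h, HasWeakImage (fun φ => pd1 (pd1 φ)) uball f h :=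
    no_example f (hf.imp fun _ hK => hK.lipschitzOnWith) hg
  obtain ⟨C, hC⟩ := exists_integral_weakImage_le isOpen_uball (fun _ => IsTest.planeLaplacian)
    (fun _ => IsTest.pd1_pd1) second_deriv_of_laplacian
  obtain ⟨w, w_smooth, w_le, w_lip, laplacian_le, le_pd1_pd1⟩ :=
    exists_integral_planeLaplacian_le_and_le_integral_pd1_pd1 (C * 26 + 1)
  have pd1_pd1_le : ∫ p in uball, |pd1 (pd1 w) p| ≤ C * 26 :=
    hC 26 w _ _ (fun p => (w_le p).trans (by norm_num)) (w_lip.weaken (by norm_num)) laplacian_le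
      (hasWeakImage_planeLaplacian isBounded_uball w_smooth)
      (hasWeakImage_dirDeriv_dirDeriv isBounded_uball w_smooth (1, 0))
  linarith
end
end

section
/- For every n ∈ ℕ there exist a nonnegative function w_n ∈ C_0^∞(ℝ²) with support in [-2,2]² and a C^∞ vector field u_n: ℝ² → ℝ² with support in [-2,2]² such that Δw_n = div u_n in the sense of distributions, ‖w_n‖_∞ ≤ 2/n, ‖u_n‖_{L¹} ≤ 3/n, and ∫_{ℝ²} |∇w_n| dx ≥ 1. -/
open MeasureTheory Real

noncomputable section

/-- Euclidean magnitude of a vector in `ℝ²`. -/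
def emag (v : ℝ × ℝ) : ℝ := Real.sqrt (v.1 ^ 2 + v.2 ^ 2)

/-!
`T - log (1 + |p|²)`, smoothly truncated to the disc on which it is positive, is at least `T - 1` at
the origin, hence so is the `L¹` norm of its mixed derivative; its Laplacian is bounded in `L¹`
uniformly in `T`. A small multiple `H` therefore has a Laplacian of small `L¹` norm and a mixed
derivative of large `L¹` norm (Ornstein). Filling the unit square with `N²` copies of `H` at scale
`1 / N` gives `G` with the same `L¹` norms of second derivatives, but with `∂₁G` uniformly small.
Adding to `∂₁G` a small smooth plateau `K` gives the nonnegative `w = ∂₁G + K`: its gradient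
contains `∂₂∂₁G`, which is large in `L¹`, while `Δw = ∂₁(ΔG + ∂₁K) + ∂₂(∂₂K)` is the divergence of a
field that is small in `L¹`.
-/

open scoped ContDiff

/-! ### Differential calculus on the plane -/

theorem tsupport_prodMk_subset {X M N : Type*} [TopologicalSpace X] [Zero M] [Zero N] (f : X → M)
    (g : X → N) : tsupport (fun x => (f x, g x)) ⊆ tsupport f ∪ tsupport g := by
  rw [tsupport, tsupport, tsupport, ← closure_union, Function.support_prodMk]

section Calculus

variable {f g : ℝ × ℝ → ℝ}

/-- The Laplace operator `∂₁² + ∂₂²` on functions on the plane, which carries the sup norm here and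
so is not covered by Mathlib's Laplacian for inner product spaces. -/
def laplacian (f : ℝ × ℝ → ℝ) : ℝ × ℝ → ℝ := pd1 (pd1 f) + pd2 (pd2 f)

theorem contDiff_fderiv_apply {E F : Type*} [NormedAddCommGroup E] [NormedSpace ℝ E]
    [NormedAddCommGroup F] [NormedSpace ℝ F] {f : E → F} (hf : ContDiff ℝ ∞ f) (v : E) :
    ContDiff ℝ ∞ fun p => fderiv ℝ f p v :=
  (hf.fderiv_right (by simp)).clm_apply contDiff_const

theorem contDiff_pd1 (hf : ContDiff ℝ ∞ f) : ContDiff ℝ ∞ (pd1 f) :=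
  contDiff_fderiv_apply hf _

theorem contDiff_pd2 (hf : ContDiff ℝ ∞ f) : ContDiff ℝ ∞ (pd2 f) :=
  contDiff_fderiv_apply hf _

theorem tsupport_pd1_subset (f : ℝ × ℝ → ℝ) : tsupport (pd1 f) ⊆ tsupport f :=
  tsupport_fderiv_apply_subset ℝ _

theorem tsupport_pd2_subset (f : ℝ × ℝ → ℝ) : tsupport (pd2 f) ⊆ tsupport f :=
  tsupport_fderiv_apply_subset ℝ _

theorem tsupport_laplacian_subset (f : ℝ × ℝ → ℝ) : tsupport (laplacian f) ⊆ tsupport f :=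
  (tsupport_add _ _).trans <| Set.union_subset
    ((tsupport_pd1_subset _).trans (tsupport_pd1_subset f))
    ((tsupport_pd2_subset _).trans (tsupport_pd2_subset f))

theorem pd1_add (hf : Differentiable ℝ f) (hg : Differentiable ℝ g) :
    pd1 (f + g) = pd1 f + pd1 g := by
  funext p
  simp [pd1, fderiv_add (hf p) (hg p)]

theorem pd2_add (hf : Differentiable ℝ f) (hg : Differentiable ℝ g) :
    pd2 (f + g) = pd2 f + pd2 g := by
  funext p
  simp [pd2, fderiv_add (hf p) (hg p)]

theorem pd1_smul (a : ℝ) (f : ℝ × ℝ → ℝ) : pd1 (a • f) = a • pd1 f := by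
  funext p
  simp [pd1, fderiv_const_smul_field]

theorem pd2_smul (a : ℝ) (f : ℝ × ℝ → ℝ) : pd2 (a • f) = a • pd2 f := by
  funext p
  simp [pd2, fderiv_const_smul_field]

theorem laplacian_smul (a : ℝ) (f : ℝ × ℝ → ℝ) : laplacian (a • f) = a • laplacian f := by
  simp only [laplacian, pd1_smul, pd2_smul, smul_add]

theorem pd1_pd2_comm (hf : ContDiff ℝ 2 f) : pd1 (pd2 f) = pd2 (pd1 f) := by
  funext p
  have hd : DifferentiableAt ℝ (fderiv ℝ f) p :=
    (hf.fderiv_right (m := 1) le_rfl).differentiable one_ne_zero p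
  have hsymm : IsSymmSndFDerivAt ℝ f p := hf.contDiffAt.isSymmSndFDerivAt (by simp)
  unfold pd1 pd2
  rw [fderiv_clm_apply hd (by fun_prop), fderiv_clm_apply hd (by fun_prop)]
  simpa using hsymm (1, 0) (0, 1)

theorem laplacian_pd1 (hf : ContDiff ℝ ∞ f) : laplacian (pd1 f) = pd1 (laplacian f) := by
  have h11 := contDiff_pd1 (contDiff_pd1 hf)
  have h22 := contDiff_pd2 (contDiff_pd2 hf)
  unfold laplacian
  rw [pd1_add (h11.differentiable (by simp)) (h22.differentiable (by simp)),
    pd1_pd2_comm (contDiff_infty.1 (contDiff_pd2 hf) 2), pd1_pd2_comm (contDiff_infty.1 hf 2)]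

theorem laplacian_add (hf : ContDiff ℝ ∞ f) (hg : ContDiff ℝ ∞ g) :
    laplacian (f + g) = laplacian f + laplacian g := by
  unfold laplacian
  rw [pd1_add (hf.differentiable (by simp)) (hg.differentiable (by simp)),
    pd2_add (hf.differentiable (by simp)) (hg.differentiable (by simp)),
    pd1_add ((contDiff_pd1 hf).differentiable (by simp))
      ((contDiff_pd1 hg).differentiable (by simp)),
    pd2_add ((contDiff_pd2 hf).differentiable (by simp))
      ((contDiff_pd2 hg).differentiable (by simp)), add_add_add_comm]

theorem hasDerivAt_pd1 (hf : Differentiable ℝ f) (x y : ℝ) :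
    HasDerivAt (fun t => f (t, y)) (pd1 f (x, y)) x :=
  (hf (x, y)).hasFDerivAt.comp_hasDerivAt x ((hasDerivAt_id x).prodMk (hasDerivAt_const x y))

theorem hasDerivAt_pd2 (hf : Differentiable ℝ f) (x y : ℝ) :
    HasDerivAt (fun t => f (x, t)) (pd2 f (x, y)) y :=
  (hf (x, y)).hasFDerivAt.comp_hasDerivAt y ((hasDerivAt_const y x).prodMk (hasDerivAt_id y))

theorem fderiv_apply_eq_pd (f : ℝ × ℝ → ℝ) (p v : ℝ × ℝ) :
    fderiv ℝ f p v = v.1 * pd1 f p + v.2 * pd2 f p := by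
  have hv : v = v.1 • (1, 0) + v.2 • (0, 1) := by ext <;> simp
  conv_lhs => rw [hv, map_add, map_smul, map_smul]
  rfl

end Calculus

namespace IsTest

variable {f g : ℝ × ℝ → ℝ}

protected theorem continuous (hf : IsTest f) : Continuous f := hf.1.continuous

protected theorem differentiable (hf : IsTest f) : Differentiable ℝ f :=
  hf.1.differentiable (by simp)

protected theorem add (hf : IsTest f) (hg : IsTest g) : IsTest (f + g) :=
  ⟨hf.1.add hg.1, hf.2.add hg.2⟩

protected theorem smul (hf : IsTest f) (a : ℝ) : IsTest (a • f) :=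
  ⟨hf.1.const_smul a, hf.2.smul_left (f := fun _ => a)⟩

theorem fderiv_apply (hf : IsTest f) (v : ℝ × ℝ) : IsTest fun p => fderiv ℝ f p v :=
  ⟨contDiff_fderiv_apply hf.1 v, hf.2.fderiv_apply ℝ v⟩

protected theorem pd1 (hf : IsTest f) : IsTest (pd1 f) := hf.fderiv_apply _

protected theorem pd2 (hf : IsTest f) : IsTest (pd2 f) := hf.fderiv_apply _

protected theorem laplacian (hf : IsTest f) : IsTest (laplacian f) :=
  hf.pd1.pd1.add hf.pd2.pd2

theorem integrable_mul_s18 (hf : IsTest f) (hg : Continuous g) : Integrable (fun p => f p * g p) :=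
  (hf.continuous.mul hg).integrable_of_hasCompactSupport hf.2.mul_right

protected theorem integrable (hf : IsTest f) : Integrable f :=
  hf.continuous.integrable_of_hasCompactSupport hf.2

theorem exists_abs_le (hf : IsTest f) : ∃ M, ∀ p, |f p| ≤ M :=
  hf.continuous.bounded_above_of_compact_support hf.2

theorem integral_mul_fderiv (hf : IsTest f) (hg : ContDiff ℝ ∞ g) (v : ℝ × ℝ) :
    ∫ p, f p * fderiv ℝ g p v = -∫ p, fderiv ℝ f p v * g p :=
  integral_mul_fderiv_eq_neg_fderiv_mul_of_integrable
    ((IsTest.fderiv_apply hf v).integrable_mul_s18 hg.continuous)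
    (hf.integrable_mul_s18 (contDiff_fderiv_apply hg v).continuous)
    (hf.integrable_mul_s18 hg.continuous) (fun p _ => hf.differentiable p)
    fun p _ => hg.differentiable (by simp) p

theorem integral_mul_pd1 (hf : IsTest f) (hg : ContDiff ℝ ∞ g) :
    ∫ p, f p * pd1 g p = -∫ p, pd1 f p * g p :=
  integral_mul_fderiv hf hg _

theorem integral_mul_pd2 (hf : IsTest f) (hg : ContDiff ℝ ∞ g) :
    ∫ p, f p * pd2 g p = -∫ p, pd2 f p * g p :=
  integral_mul_fderiv hf hg _

theorem integral_mul_laplacian (hf : IsTest f) (hg : ContDiff ℝ ∞ g) :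
    ∫ p, f p * laplacian g p = ∫ p, laplacian f p * g p := by
  have h1 := contDiff_pd1 hg
  have h2 := contDiff_pd2 hg
  simp only [laplacian, Pi.add_apply, mul_add, add_mul]
  rw [integral_add (hf.integrable_mul_s18 (contDiff_pd1 h1).continuous)
      (hf.integrable_mul_s18 (contDiff_pd2 h2).continuous),
    integral_add (hf.pd1.pd1.integrable_mul_s18 hg.continuous)
      (hf.pd2.pd2.integrable_mul_s18 hg.continuous),
    hf.integral_mul_pd1 h1, hf.pd1.integral_mul_pd1 hg, neg_neg,
    hf.integral_mul_pd2 h2, hf.pd2.integral_mul_pd2 hg, neg_neg]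

theorem integral_fderiv_apply_prodMk (hf : IsTest f) (hg : IsTest g) {φ : ℝ × ℝ → ℝ}
    (hφ : ContDiff ℝ ∞ φ) :
    ∫ p, fderiv ℝ φ p (f p, g p) = -∫ p, (pd1 f + pd2 g) p * φ p := by
  simp only [fderiv_apply_eq_pd φ, Pi.add_apply, add_mul]
  rw [integral_add (hf.integrable_mul_s18 (contDiff_pd1 hφ).continuous)
      (hg.integrable_mul_s18 (contDiff_pd2 hφ).continuous),
    integral_add (hf.pd1.integrable_mul_s18 hφ.continuous) (hg.pd2.integrable_mul_s18 hφ.continuous),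
    hf.integral_mul_pd1 hφ, hg.integral_mul_pd2 hφ, neg_add]

end IsTest

theorem laplacian_pd1_add {G K : ℝ × ℝ → ℝ} (hG : ContDiff ℝ ∞ G) (hK : ContDiff ℝ ∞ K) :
    laplacian (pd1 G + K) = pd1 (laplacian G + pd1 K) + pd2 (pd2 K) := by
  have hΔ : ContDiff ℝ ∞ (laplacian G) :=
    (contDiff_pd1 (contDiff_pd1 hG)).add (contDiff_pd2 (contDiff_pd2 hG))
  rw [laplacian_add (contDiff_pd1 hG) hK, laplacian_pd1 hG,
    pd1_add (hΔ.differentiable (by simp)) ((contDiff_pd1 hK).differentiable (by simp)), add_assoc]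
  rfl

section Emag

variable {α : Type*} [MeasurableSpace α] {μ : Measure α} {f g : α → ℝ}

theorem emag_nonneg (v : ℝ × ℝ) : 0 ≤ emag v := Real.sqrt_nonneg _

theorem emag_le_abs_add_abs (v : ℝ × ℝ) : emag v ≤ |v.1| + |v.2| :=
  Real.sqrt_le_iff.2 ⟨by positivity, by
    nlinarith [sq_abs v.1, sq_abs v.2, mul_nonneg (abs_nonneg v.1) (abs_nonneg v.2)]⟩

theorem abs_snd_le_emag (v : ℝ × ℝ) : |v.2| ≤ emag v :=
  Real.abs_le_sqrt (le_add_of_nonneg_left (sq_nonneg v.1))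

theorem continuous_emag : Continuous emag := by
  unfold emag
  fun_prop

theorem integral_abs_add_le (hf : Integrable f μ) (hg : Integrable g μ) :
    ∫ a, |f a + g a| ∂μ ≤ ∫ a, |f a| ∂μ + ∫ a, |g a| ∂μ := by
  rw [← integral_add hf.abs hg.abs]
  exact integral_mono (hf.add hg).abs (hf.abs.add hg.abs) fun a => abs_add_le _ _

theorem integrable_emag (hf : Integrable f μ) (hg : Integrable g μ) :
    Integrable (fun a => emag (f a, g a)) μ :=
  (hf.abs.add hg.abs).mono' (continuous_emag.comp_aestronglyMeasurable (hf.1.prodMk hg.1)) <|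
    .of_forall fun a => by
      rw [Real.norm_of_nonneg (emag_nonneg _)]
      exact emag_le_abs_add_abs _

theorem integral_emag_le (hf : Integrable f μ) (hg : Integrable g μ) :
    ∫ a, emag (f a, g a) ∂μ ≤ ∫ a, |f a| ∂μ + ∫ a, |g a| ∂μ := by
  rw [← integral_add hf.abs hg.abs]
  exact integral_mono (integrable_emag hf hg) (hf.abs.add hg.abs) fun a => emag_le_abs_add_abs _

theorem integral_abs_le_integral_emag (hf : Integrable f μ) (hg : Integrable g μ) :
    ∫ a, |g a| ∂μ ≤ ∫ a, emag (f a, g a) ∂μ :=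
  integral_mono hg.abs (integrable_emag hf hg) fun a => abs_snd_le_emag (f a, g a)

end Emag

/-! ### The mixed derivative -/

theorem integral_Iic_pd1 {f : ℝ × ℝ → ℝ} (hf : IsTest f) (a b : ℝ) :
    ∫ x in Set.Iic a, pd1 f (x, b) = f (a, b) := by
  have hsmooth : ContDiff ℝ ∞ fun x => f (x, b) := hf.1.comp (contDiff_prodMk_left b)
  have hcomp : HasCompactSupport fun x => f (x, b) :=
    hf.2.comp_isClosedEmbedding <|
    Function.LeftInverse.isClosedEmbedding (f := Prod.fst) (fun _ => rfl) (by fun_prop)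
      (by fun_prop)
  rw [← hcomp.integral_Iic_deriv_eq (contDiff_infty.1 hsmooth 1) a]
  simp only [(hasDerivAt_pd1 hf.differentiable _ b).deriv]

theorem integral_Iic_pd2 {f : ℝ × ℝ → ℝ} (hf : IsTest f) (a b : ℝ) :
    ∫ y in Set.Iic b, pd2 f (a, y) = f (a, b) := by
  have hsmooth : ContDiff ℝ ∞ fun y => f (a, y) := hf.1.comp (contDiff_prodMk_right a)
  have hcomp : HasCompactSupport fun y => f (a, y) :=
    hf.2.comp_isClosedEmbedding <|
    Function.LeftInverse.isClosedEmbedding (f := Prod.snd) (fun _ => rfl) (by fun_prop)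
      (by fun_prop)
  rw [← hcomp.integral_Iic_deriv_eq (contDiff_infty.1 hsmooth 1) b]
  simp only [(hasDerivAt_pd2 hf.differentiable a _).deriv]

theorem abs_le_integral_abs_pd2_pd1 {f : ℝ × ℝ → ℝ} (hf : IsTest f) (a b : ℝ) :
    |f (a, b)| ≤ ∫ p, |pd2 (pd1 f) p| := by
  have hint : Integrable (pd2 (pd1 f)) := hf.pd1.pd2.integrable
  have hquadrant : ∫ p in Set.Iic a ×ˢ Set.Iic b, pd2 (pd1 f) p = f (a, b) := by
    rw [Measure.volume_eq_prod, setIntegral_prod _ hint.integrableOn]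
    simp only [integral_Iic_pd2 hf.pd1, integral_Iic_pd1 hf]
  calc |f (a, b)| = |∫ p in Set.Iic a ×ˢ Set.Iic b, pd2 (pd1 f) p| := by rw [hquadrant]
    _ ≤ ∫ p in Set.Iic a ×ˢ Set.Iic b, |pd2 (pd1 f) p| := abs_integral_le_integral_abs
    _ ≤ ∫ p, |pd2 (pd1 f) p| :=
      setIntegral_le_integral hint.abs (.of_forall fun _ => abs_nonneg _)

/-! ### The truncated logarithm -/

section TruncLog

/-- A smooth substitute for the positive part of `t`: it vanishes for `t ≤ 0` and has slope `1` for
`t ≥ 1`. -/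
def smoothRamp (t : ℝ) : ℝ := ∫ s in (0 : ℝ)..t, Real.smoothTransition s

theorem hasDerivAt_smoothRamp (t : ℝ) : HasDerivAt smoothRamp (Real.smoothTransition t) t :=
  (Real.smoothTransition.continuous.integral_hasStrictDerivAt 0 t).hasDerivAt

theorem contDiff_smoothRamp : ContDiff ℝ ∞ smoothRamp := by
  refine contDiff_infty_iff_deriv.2 ⟨fun t => (hasDerivAt_smoothRamp t).differentiableAt, ?_⟩
  rw [show deriv smoothRamp = Real.smoothTransition from
    funext fun t => (hasDerivAt_smoothRamp t).deriv]
  exact Real.smoothTransition.contDiff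

theorem smoothRamp_of_nonpos {t : ℝ} (ht : t ≤ 0) : smoothRamp t = 0 :=
  intervalIntegral.integral_zero_ae <| .of_forall fun s hs =>
    Real.smoothTransition.zero_of_nonpos (by rw [Set.uIoc_of_ge ht] at hs; exact hs.2)

theorem sub_one_le_smoothRamp {t : ℝ} (ht : 1 ≤ t) : t - 1 ≤ smoothRamp t := by
  have hint (a b : ℝ) : IntervalIntegrable Real.smoothTransition volume a b :=
    Real.smoothTransition.continuous.intervalIntegrable a b
  have hslope : ∫ s in (1 : ℝ)..t, Real.smoothTransition s = t - 1 := by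
    rw [← mul_one (t - 1), ← smul_eq_mul, ← intervalIntegral.integral_const]
    refine intervalIntegral.integral_congr fun s hs => ?_
    rw [Set.uIcc_of_le ht] at hs
    exact Real.smoothTransition.one_of_one_le hs.1
  have hstart : 0 ≤ ∫ s in (0 : ℝ)..1, Real.smoothTransition s :=
    intervalIntegral.integral_nonneg zero_le_one fun s _ => Real.smoothTransition.nonneg s
  rw [smoothRamp, ← intervalIntegral.integral_add_adjacent_intervals (hint 0 1) (hint 1 t)]
  linarith

theorem support_deriv_smoothTransition_subset :
    Function.support (deriv Real.smoothTransition) ⊆ Set.Icc 0 1 := by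
  refine Function.support_subset_iff'.2 fun t ht => ?_
  rcases not_and_or.1 ht with h | h
  · have : Real.smoothTransition =ᶠ[nhds t] fun _ => 0 := by
      filter_upwards [Iio_mem_nhds (not_le.1 h)] with s hs
      exact Real.smoothTransition.zero_of_nonpos (le_of_lt hs)
    rw [this.deriv_eq, deriv_const]
  · have : Real.smoothTransition =ᶠ[nhds t] fun _ => 1 := by
      filter_upwards [Ioi_mem_nhds (not_le.1 h)] with s hs
      exact Real.smoothTransition.one_of_one_le (le_of_lt hs)
    rw [this.deriv_eq, deriv_const]

theorem exists_abs_deriv_smoothTransition_le : ∃ B, ∀ t, |deriv Real.smoothTransition t| ≤ B :=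
  (Real.smoothTransition.contDiff (n := 1).continuous_deriv le_rfl).bounded_above_of_compact_support
    (HasCompactSupport.of_support_subset_isCompact isCompact_Icc
      support_deriv_smoothTransition_subset)

/-- The square `1 + |p|²` of the Japanese bracket of `p`, with the Euclidean `|p|`. -/
def bracketSq (p : ℝ × ℝ) : ℝ := 1 + p.1 ^ 2 + p.2 ^ 2

theorem bracketSq_pos (p : ℝ × ℝ) : 0 < bracketSq p := by
  unfold bracketSq
  positivity

theorem one_add_norm_sq_le_bracketSq (p : ℝ × ℝ) : 1 + ‖p‖ ^ 2 ≤ bracketSq p := by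
  unfold bracketSq
  rcases max_choice ‖p.1‖ ‖p.2‖ with h | h <;>
    rw [Prod.norm_def, h, Real.norm_eq_abs, sq_abs] <;> nlinarith [sq_nonneg p.1, sq_nonneg p.2]

theorem contDiff_bracketSq : ContDiff ℝ ∞ bracketSq := by
  unfold bracketSq
  fun_prop

theorem hasFDerivAt_bracketSq (p : ℝ × ℝ) :
    HasFDerivAt bracketSq ((2 * p.1) • ContinuousLinearMap.fst ℝ ℝ ℝ +
      (2 * p.2) • ContinuousLinearMap.snd ℝ ℝ ℝ) p := by
  have h1 := (hasFDerivAt_fst (𝕜 := ℝ) (p := p)).pow 2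
  have h2 := (hasFDerivAt_snd (𝕜 := ℝ) (p := p)).pow 2
  refine ((h1.const_add 1).add h2).congr_fderiv ?_
  ext <;> simp

theorem laplacian_comp_bracketSq {f f' f'' : ℝ → ℝ} (hf : ∀ t > 0, HasDerivAt f (f' t) t)
    (hf' : ∀ t > 0, HasDerivAt f' (f'' t) t) (p : ℝ × ℝ) :
    laplacian (f ∘ bracketSq) p =
      4 * (bracketSq p - 1) * f'' (bracketSq p) + 4 * f' (bracketSq p) := by
  have hcomp (q : ℝ × ℝ) := (hf _ (bracketSq_pos q)).comp_hasFDerivAt q (hasFDerivAt_bracketSq q)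
  have hcomp' := (hf' _ (bracketSq_pos p)).comp_hasFDerivAt p (hasFDerivAt_bracketSq p)
  have h1 : pd1 (f ∘ bracketSq) = fun q => (f' ∘ bracketSq) q * (2 * q.1) := by
    funext q
    simp [pd1, (hcomp q).fderiv]
  have h2 : pd2 (f ∘ bracketSq) = fun q => (f' ∘ bracketSq) q * (2 * q.2) := by
    funext q
    simp [pd2, (hcomp q).fderiv]
  have h11 : pd1 (pd1 (f ∘ bracketSq)) p =
      f'' (bracketSq p) * (2 * p.1) ^ 2 + f' (bracketSq p) * 2 := by
    rw [h1, pd1, (hcomp'.fun_mul (hasFDerivAt_fst.const_mul 2)).fderiv]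
    simp only [Function.comp_apply, smul_add, add_apply, smul_apply, ContinuousLinearMap.coe_fst',
      ContinuousLinearMap.coe_snd', smul_eq_mul, mul_one, mul_zero, add_zero]
    ring
  have h22 : pd2 (pd2 (f ∘ bracketSq)) p =
      f'' (bracketSq p) * (2 * p.2) ^ 2 + f' (bracketSq p) * 2 := by
    rw [h2, pd2, (hcomp'.fun_mul (hasFDerivAt_snd.const_mul 2)).fderiv]
    simp only [Function.comp_apply, smul_add, add_apply, smul_apply, ContinuousLinearMap.coe_fst',
      ContinuousLinearMap.coe_snd', smul_eq_mul, mul_one, mul_zero, zero_add]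
    ring
  rw [laplacian, Pi.add_apply, h11, h22, bracketSq]
  ring

/-- The logarithm `T - log (1 + |p|²)`, smoothly truncated to the disc on which it is positive. -/
def truncLog (T : ℝ) (p : ℝ × ℝ) : ℝ := smoothRamp (T - log (bracketSq p))

theorem isTest_truncLog (T : ℝ) : IsTest (truncLog T) := by
  refine ⟨contDiff_smoothRamp.comp (contDiff_const.sub
    (contDiff_bracketSq.log fun p => (bracketSq_pos p).ne')), ?_⟩
  refine HasCompactSupport.intro (isCompact_closedBall 0 (exp T)) fun p hp => ?_
  have hnorm : exp T < ‖p‖ := by simpa using hp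
  have hlog : T < log (bracketSq p) := (lt_log_iff_exp_lt (bracketSq_pos p)).2 <| by
    nlinarith [one_add_norm_sq_le_bracketSq p, exp_pos T]
  exact smoothRamp_of_nonpos (by linarith)

theorem sub_one_le_truncLog_zero {T : ℝ} (hT : 1 ≤ T) : T - 1 ≤ truncLog T (0, 0) := by
  simpa [truncLog, bracketSq] using sub_one_le_smoothRamp hT

theorem laplacian_truncLog (T : ℝ) (p : ℝ × ℝ) :
    laplacian (truncLog T) p =
      4 * (bracketSq p - 1) / bracketSq p ^ 2 *
          deriv Real.smoothTransition (T - log (bracketSq p)) -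
        4 / bracketSq p ^ 2 * Real.smoothTransition (T - log (bracketSq p)) := by
  have hlog (t : ℝ) (ht : t > 0) : HasDerivAt (fun t => T - log t) (-t⁻¹) t :=
    (hasDerivAt_log ht.ne').const_sub T
  have htrans (t : ℝ) :
      HasDerivAt Real.smoothTransition (deriv Real.smoothTransition t) t :=
    (Real.smoothTransition.contDiff (n := 1).differentiable one_ne_zero t).hasDerivAt
  have hramp (t : ℝ) (ht : t > 0) : HasDerivAt (smoothRamp ∘ fun t => T - log t)
      (Real.smoothTransition (T - log t) * -t⁻¹) t :=
    (hasDerivAt_smoothRamp (T - log t)).comp t (hlog t ht)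
  have hslope (t : ℝ) (ht : t > 0) := ((htrans (T - log t)).comp t (hlog t ht)).fun_mul
    (hasDerivAt_inv ht.ne').fun_neg
  have h := laplacian_comp_bracketSq hramp hslope p
  refine h.trans ?_
  have := (bracketSq_pos p).ne'
  simp only [Function.comp_apply]
  field_simp
  ring

/-- The rescaling `r⁻² (1 + ‖p/r‖²)⁻²` of a fixed integrable function. It dominates the part of the
Laplacian of a truncated logarithm that lives at distance comparable to `r` from the origin. -/
def bubble (r : ℝ) (p : ℝ × ℝ) : ℝ := r ^ 2 / (r ^ 2 + ‖p‖ ^ 2) ^ 2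

theorem bubble_eq_smul {r : ℝ} (hr : r ≠ 0) :
    bubble r = fun p => (r ^ 2)⁻¹ * bubble 1 (r⁻¹ • p) := by
  funext p
  simp only [bubble, norm_smul, norm_inv, mul_pow, inv_pow, Real.norm_eq_abs, sq_abs]
  field_simp

theorem integrable_bubble {r : ℝ} (hr : r ≠ 0) : Integrable (bubble r) := by
  have hone : Integrable (bubble 1) := by
    have h : Integrable fun p : ℝ × ℝ => ((1 : ℝ) + ‖p‖ ^ 2) ^ (-(4 : ℝ) / 2) :=
      integrable_rpow_neg_one_add_norm_sq (by norm_num)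
    refine h.congr (.of_forall fun p => ?_)
    have : -(4 : ℝ) / 2 = -(2 : ℕ) := by norm_num
    simp only [bubble, one_pow, one_div]
    rw [this, rpow_neg (by positivity), rpow_natCast]
  rw [bubble_eq_smul hr]
  exact (hone.comp_smul (inv_ne_zero hr)).const_mul _

theorem integral_bubble {r : ℝ} (hr : r ≠ 0) : ∫ p, bubble r p = ∫ p, bubble 1 p := by
  rw [bubble_eq_smul hr, integral_const_mul, Measure.integral_comp_inv_smul]
  simp only [Module.finrank_prod, Module.finrank_self, Nat.reduceAdd, abs_pow, sq_abs, smul_eq_mul]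
  field_simp

theorem inv_bracketSq_sq_le_bubble_one (p : ℝ × ℝ) : (bracketSq p ^ 2)⁻¹ ≤ bubble 1 p := by
  rw [bubble, one_pow, ← one_div]
  gcongr
  exact one_add_norm_sq_le_bracketSq p

/-- Where the truncation acts, `1 + |p|²` is comparable to `exp T`. -/
theorem inv_bracketSq_le_bubble {T : ℝ} {p : ℝ × ℝ} (hp : T - log (bracketSq p) ∈ Set.Icc 0 1) :
    (bracketSq p)⁻¹ ≤ 16 * bubble (exp (T / 2)) p := by
  have hs := bracketSq_pos p
  have hr : exp (T / 2) ^ 2 = exp T := by rw [← exp_nat_mul]; congr 1; push_cast; ring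
  have hle : bracketSq p ≤ exp T := (log_le_iff_le_exp hs).1 (by linarith [hp.1])
  have hge : exp T ≤ 3 * bracketSq p := calc
    exp T ≤ exp (1 + log (bracketSq p)) := exp_le_exp.2 (by linarith [hp.2])
    _ = exp 1 * bracketSq p := by rw [exp_add, exp_log hs]
    _ ≤ 3 * bracketSq p := by gcongr; exact exp_one_lt_three.le
  have hsum : exp T + ‖p‖ ^ 2 ≤ 4 * bracketSq p := by
    linarith [one_add_norm_sq_le_bracketSq p]
  rw [bubble, hr]
  calc (bracketSq p)⁻¹ = 16 * (bracketSq p / (4 * bracketSq p) ^ 2) := by field_simp; norm_num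
    _ ≤ 16 * (exp T / (exp T + ‖p‖ ^ 2) ^ 2) := by gcongr

theorem abs_laplacian_truncLog_le {B : ℝ} (hB : ∀ t, |deriv Real.smoothTransition t| ≤ B) (T : ℝ)
    (p : ℝ × ℝ) :
    |laplacian (truncLog T) p| ≤ 64 * B * bubble (exp (T / 2)) p + 4 * bubble 1 p := by
  set s := bracketSq p
  set τ := T - log s
  have hs0 : 0 < s := bracketSq_pos p
  have hs1 : 1 ≤ s := by nlinarith [one_add_norm_sq_le_bracketSq p]
  have hB0 : 0 ≤ B := (abs_nonneg _).trans (hB 0)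
  have houter : |4 * (s - 1) / s ^ 2 * deriv Real.smoothTransition τ| ≤
      64 * B * bubble (exp (T / 2)) p := by
    by_cases h : deriv Real.smoothTransition τ = 0
    · rw [h, mul_zero, abs_zero]
      unfold bubble
      positivity
    rw [abs_mul, abs_of_nonneg (div_nonneg (by linarith) (by positivity))]
    calc 4 * (s - 1) / s ^ 2 * |deriv Real.smoothTransition τ|
        ≤ 4 * s / s ^ 2 * B := by gcongr; exacts [by linarith, hB τ]
      _ = 4 * B * s⁻¹ := by field_simp
      _ ≤ 4 * B * (16 * bubble (exp (T / 2)) p) := by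
        gcongr
        exact inv_bracketSq_le_bubble (support_deriv_smoothTransition_subset h)
      _ = 64 * B * bubble (exp (T / 2)) p := by ring
  have hinner : |4 / s ^ 2 * Real.smoothTransition τ| ≤ 4 * bubble 1 p := by
    rw [abs_of_nonneg (mul_nonneg (by positivity) (Real.smoothTransition.nonneg τ))]
    calc 4 / s ^ 2 * Real.smoothTransition τ ≤ 4 / s ^ 2 * 1 := by
          gcongr
          exact Real.smoothTransition.le_one τ
      _ = 4 * (s ^ 2)⁻¹ := by ring
      _ ≤ 4 * bubble 1 p := by gcongr; exact inv_bracketSq_sq_le_bubble_one p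
  rw [laplacian_truncLog]
  exact (abs_sub _ _).trans (add_le_add houter hinner)

theorem exists_integral_abs_laplacian_truncLog_le :
    ∃ C > 0, ∀ T, ∫ p, |laplacian (truncLog T) p| ≤ C := by
  obtain ⟨B, hB⟩ := exists_abs_deriv_smoothTransition_le
  have hB0 : 0 ≤ B := (abs_nonneg _).trans (hB 0)
  have hI : 0 ≤ ∫ p, bubble 1 p := integral_nonneg fun p => by unfold bubble; positivity
  refine ⟨(64 * B + 4) * (∫ p, bubble 1 p) + 1, by positivity, fun T => ?_⟩
  have hT := (integrable_bubble (exp_pos (T / 2)).ne').const_mul (64 * B)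
  have h1 := (integrable_bubble one_ne_zero).const_mul 4
  calc ∫ p, |laplacian (truncLog T) p|
      ≤ ∫ p, (64 * B * bubble (exp (T / 2)) p + 4 * bubble 1 p) :=
        integral_mono (isTest_truncLog T).laplacian.integrable.abs (hT.add h1)
          (abs_laplacian_truncLog_le hB T)
    _ = (64 * B + 4) * ∫ p, bubble 1 p := by
        rw [integral_add hT h1, integral_const_mul, integral_const_mul,
          integral_bubble (exp_pos _).ne']
        ring
    _ ≤ (64 * B + 4) * (∫ p, bubble 1 p) + 1 := by linarith

/-- Ornstein's non-inequality. -/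
theorem exists_isTest_laplacian_small_mixed_large {ε : ℝ} (hε : 0 < ε) {A : ℝ} (hA : 0 ≤ A) :
    ∃ H, IsTest H ∧ ∫ p, |laplacian H p| ≤ ε ∧ A ≤ ∫ p, |pd2 (pd1 H) p| := by
  obtain ⟨C, hC, hlap⟩ := exists_integral_abs_laplacian_truncLog_le
  have ha : 0 < ε / C := by positivity
  set T := 1 + A / (ε / C) with hT
  have habs : |ε / C| = ε / C := abs_of_pos ha
  have hmixed : A / (ε / C) ≤ ∫ p, |pd2 (pd1 (truncLog T)) p| := calc
    A / (ε / C) = T - 1 := by rw [hT]; ring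
    _ ≤ truncLog T (0, 0) := sub_one_le_truncLog_zero (by rw [hT]; linarith [div_nonneg hA ha.le])
    _ ≤ |truncLog T (0, 0)| := le_abs_self _
    _ ≤ _ := abs_le_integral_abs_pd2_pd1 (isTest_truncLog T) 0 0
  refine ⟨(ε / C) • truncLog T, (isTest_truncLog T).smul _, ?_, ?_⟩
  · simp only [laplacian_smul, Pi.smul_apply, smul_eq_mul, abs_mul, habs, integral_const_mul]
    calc ε / C * ∫ p, |laplacian (truncLog T) p| ≤ ε / C * C := by gcongr; exact hlap T
      _ = ε := by field_simp
  · simp only [pd1_smul, pd2_smul, Pi.smul_apply, smul_eq_mul, abs_mul, habs, integral_const_mul]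
    rwa [div_le_iff₀' ha] at hmixed

end TruncLog

/-! ### Tiling -/

section Tiling

/-- The grid indices `(i, j)` of the `N²` cells of side `1 / N` in the unit square. -/
def cells (N : ℕ) : Finset (ℕ × ℕ) := Finset.range N ×ˢ Finset.range N

/-- The coordinates on the cell `c` of the `N × N` grid in which the cell is the ball of radius
`L / 2` about the origin, for the sup norm. -/
def cellCoord (L : ℝ) (N : ℕ) (c : ℕ × ℕ) (p : ℝ × ℝ) : ℝ × ℝ :=
  L • ((N : ℝ) • p - ((c.1 : ℝ) + 1 / 2, (c.2 : ℝ) + 1 / 2))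

/-- The sum of copies of `g`, one in each cell of the `N × N` grid in the unit square. The copies
are disjoint when `g` is supported in the ball of radius `L / 2` about the origin. -/
def tile (L : ℝ) (N : ℕ) (g : ℝ × ℝ → ℝ) (p : ℝ × ℝ) : ℝ :=
  ∑ c ∈ cells N, g (cellCoord L N c p)

variable {L : ℝ} {N : ℕ} {g : ℝ × ℝ → ℝ}

theorem cellCoord_mem_ball_iff (hL : 0 < L) {c : ℕ × ℕ} {p : ℝ × ℝ} :
    cellCoord L N c p ∈ Metric.ball 0 (L / 2) ↔
      (c.1 < N * p.1 ∧ N * p.1 < c.1 + 1) ∧ c.2 < N * p.2 ∧ N * p.2 < c.2 + 1 := by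
  have hscale : cellCoord L N c p ∈ Metric.ball 0 (L / 2) ↔
      ‖(N : ℝ) • p - ((c.1 : ℝ) + 1 / 2, (c.2 : ℝ) + 1 / 2)‖ < 1 / 2 := by
    rw [mem_ball_zero_iff, cellCoord, norm_smul, Real.norm_of_nonneg hL.le, div_eq_mul_one_div L,
      mul_lt_mul_iff_right₀ hL]
  rw [hscale, Prod.norm_def, max_lt_iff]
  simp only [Prod.fst_sub, Prod.snd_sub, Prod.smul_fst, Prod.smul_snd, smul_eq_mul,
    Real.norm_eq_abs, abs_lt]
  refine and_congr (and_congr ?_ ?_) (and_congr ?_ ?_) <;> constructor <;> intro <;> linarith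

theorem eq_of_cellCoord_mem_ball (hL : 0 < L) {c d : ℕ × ℕ} {p : ℝ × ℝ}
    (hc : cellCoord L N c p ∈ Metric.ball 0 (L / 2))
    (hd : cellCoord L N d p ∈ Metric.ball 0 (L / 2)) : c = d := by
  obtain ⟨⟨hc1, hc1'⟩, hc2, hc2'⟩ := (cellCoord_mem_ball_iff hL).1 hc
  obtain ⟨⟨hd1, hd1'⟩, hd2, hd2'⟩ := (cellCoord_mem_ball_iff hL).1 hd
  have key {m n : ℕ} {x : ℝ} (hm : m < x) (hn : x < n + 1) : m ≤ n :=
    Nat.lt_succ_iff.1 (by exact_mod_cast hm.trans hn)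
  exact Prod.ext (le_antisymm (key hc1 hd1') (key hd1 hc1'))
    (le_antisymm (key hc2 hd2') (key hd2 hc2'))

theorem contDiff_cellCoord (L : ℝ) (N : ℕ) (c : ℕ × ℕ) : ContDiff ℝ ∞ (cellCoord L N c) := by
  unfold cellCoord
  fun_prop

theorem contDiff_tile (hg : ContDiff ℝ ∞ g) : ContDiff ℝ ∞ (tile L N g) :=
  ContDiff.sum fun c _ => hg.comp (contDiff_cellCoord L N c)

theorem fderiv_tile_apply (hg : Differentiable ℝ g) (p v : ℝ × ℝ) :
    fderiv ℝ (tile L N g) p v = L * N * tile L N (fun q => fderiv ℝ g q v) p := by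
  have hcoord (c : ℕ × ℕ) : HasFDerivAt (cellCoord L N c)
      (L • (N : ℝ) • ContinuousLinearMap.id ℝ (ℝ × ℝ)) p :=
    (((hasFDerivAt_id p).const_smul (N : ℝ)).sub_const _).const_smul L
  have hsum : HasFDerivAt (tile L N g) _ p := HasFDerivAt.fun_sum fun c (_ : c ∈ cells N) =>
    (hg (cellCoord L N c p)).hasFDerivAt.comp p (hcoord c)
  rw [hsum.fderiv, tile, Finset.mul_sum]
  simp [mul_assoc]

theorem pd1_tile (hg : Differentiable ℝ g) : pd1 (tile L N g) = (L * N) • tile L N (pd1 g) :=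
  funext fun p => fderiv_tile_apply hg p _

theorem pd2_tile (hg : Differentiable ℝ g) : pd2 (tile L N g) = (L * N) • tile L N (pd2 g) :=
  funext fun p => fderiv_tile_apply hg p _

theorem tile_add (g h : ℝ × ℝ → ℝ) : tile L N (g + h) = tile L N g + tile L N h :=
  funext fun _ => Finset.sum_add_distrib

theorem laplacian_tile (hg : ContDiff ℝ ∞ g) :
    laplacian (tile L N g) = (L * N) ^ 2 • tile L N (laplacian g) := by
  have h1 := (contDiff_pd1 hg).differentiable (by simp)
  have h2 := (contDiff_pd2 hg).differentiable (by simp)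
  rw [laplacian, pd1_tile (hg.differentiable (by simp)), pd2_tile (hg.differentiable (by simp)),
    pd1_smul, pd2_smul, pd1_tile h1, pd2_tile h2, smul_smul, smul_smul, ← smul_add, ← tile_add,
    laplacian, sq]

theorem pd2_pd1_tile (hg : ContDiff ℝ ∞ g) :
    pd2 (pd1 (tile L N g)) = (L * N) ^ 2 • tile L N (pd2 (pd1 g)) := by
  rw [pd1_tile (hg.differentiable (by simp)), pd2_smul,
    pd2_tile ((contDiff_pd1 hg).differentiable (by simp)), smul_smul, sq]

theorem integral_tile (hL : L ≠ 0) (hN : N ≠ 0) (hg : Integrable g) :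
    ∫ p, tile L N g p = (L ^ 2)⁻¹ * ∫ p, g p := by
  have hN' : (N : ℝ) ≠ 0 := Nat.cast_ne_zero.2 hN
  have hcell (c : ℕ × ℕ) : ∫ p, g (cellCoord L N c p) = (N ^ 2 : ℝ)⁻¹ * ((L ^ 2)⁻¹ * ∫ p, g p) := by
    unfold cellCoord
    rw [Measure.integral_comp_smul volume (fun q => g (L • (q - _))),
      integral_sub_right_eq_self (fun q => g (L • q)), Measure.integral_comp_smul]
    simp
  have hint (c : ℕ × ℕ) : Integrable fun p => g (cellCoord L N c p) :=
    ((hg.comp_smul hL).comp_sub_right _).comp_smul hN'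
  simp only [tile]
  rw [integral_finsetSum _ fun c _ => hint c]
  simp only [hcell, cells, Finset.sum_const, Finset.card_product, Finset.card_range, nsmul_eq_mul]
  push_cast
  field_simp

theorem exists_tile_eq (hL : 0 < L) (hN : N ≠ 0) (p : ℝ × ℝ) :
    ∃ c ∈ cells N, ∀ g : ℝ × ℝ → ℝ, Function.support g ⊆ Metric.ball 0 (L / 2) →
      tile L N g p = g (cellCoord L N c p) := by
  obtain ⟨c, hc, hother⟩ : ∃ c ∈ cells N, ∀ d ∈ cells N, d ≠ c →
      cellCoord L N d p ∉ Metric.ball 0 (L / 2) := by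
    by_cases h : ∃ c ∈ cells N, cellCoord L N c p ∈ Metric.ball 0 (L / 2)
    · obtain ⟨c, hc, hcp⟩ := h
      exact ⟨c, hc, fun d _ hdc hdp => hdc (eq_of_cellCoord_mem_ball hL hdp hcp)⟩
    · push Not at h
      exact ⟨(0, 0), by simp [cells, Nat.pos_of_ne_zero hN], fun d hd _ => h d hd⟩
  exact ⟨c, hc, fun g hg => Finset.sum_eq_single_of_mem c hc fun d hd hdc =>
    Function.notMem_support.1 fun hgd => hother d hd hdc (hg hgd)⟩

theorem abs_tile (hL : 0 < L) (hN : N ≠ 0) (hg : Function.support g ⊆ Metric.ball 0 (L / 2))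
    (p : ℝ × ℝ) : |tile L N g p| = tile L N (fun q => |g q|) p := by
  obtain ⟨c, -, htile⟩ := exists_tile_eq hL hN p
  rw [htile g hg, htile _ fun q hq => hg (abs_ne_zero.1 hq)]

theorem abs_tile_le (hL : 0 < L) (hN : N ≠ 0) (hg : Function.support g ⊆ Metric.ball 0 (L / 2))
    {M : ℝ} (hM : ∀ q, |g q| ≤ M) (p : ℝ × ℝ) : |tile L N g p| ≤ M := by
  obtain ⟨c, -, htile⟩ := exists_tile_eq hL hN p
  exact htile g hg ▸ hM _

theorem tsupport_tile_subset (hL : 0 < L) (hN : N ≠ 0)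
    (hg : Function.support g ⊆ Metric.ball 0 (L / 2)) :
    tsupport (tile L N g) ⊆ Set.Icc 0 1 := by
  refine closure_minimal (fun p hp => ?_) isClosed_Icc
  obtain ⟨c, hc, htile⟩ := exists_tile_eq hL hN p
  have hmem : cellCoord L N c p ∈ Metric.ball 0 (L / 2) := hg <| by
    rwa [Function.mem_support, ← htile g hg]
  obtain ⟨⟨h1, h1'⟩, h2, h2'⟩ := (cellCoord_mem_ball_iff hL).1 hmem
  have hunit {k : ℕ} {x : ℝ} (hk : k < N) (hx : k < N * x) (hx' : N * x < k + 1) :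
      0 ≤ x ∧ x ≤ 1 := by
    have hN0 : (0 : ℝ) < N := Nat.cast_pos.2 (Nat.pos_of_ne_zero hN)
    have hk' : (k : ℝ) + 1 ≤ N := by exact_mod_cast hk
    exact ⟨nonneg_of_mul_nonneg_right (k.cast_nonneg.trans hx.le) hN0,
      (mul_le_iff_le_one_right hN0).1 (hx'.le.trans hk')⟩
  simp only [cells, Finset.mem_product, Finset.mem_range] at hc
  obtain ⟨hx, hx'⟩ := hunit hc.1 h1 h1'
  obtain ⟨hy, hy'⟩ := hunit hc.2 h2 h2'
  exact ⟨⟨hx, hy⟩, hx', hy'⟩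

theorem integral_abs_smul_tile (hL : 0 < L) (hN : N ≠ 0) (hg : Integrable g)
    (hsupp : Function.support g ⊆ Metric.ball 0 (L / 2)) :
    ∫ p, |(L ^ 2 • tile L N g) p| = ∫ p, |g p| := by
  simp only [Pi.smul_apply, smul_eq_mul, abs_mul, abs_tile hL hN hsupp, integral_const_mul,
    integral_tile hL.ne' hN hg.abs, abs_pow, sq_abs]
  field_simp

end Tiling

/-- Rescaling to `N²` small cells leaves the integrals of second derivatives unchanged, while the
first derivatives become of size `1 / N`. -/
theorem IsTest.exists_small_pd1 {H : ℝ × ℝ → ℝ} (hH : IsTest H) {δ : ℝ} (hδ : 0 < δ) :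
    ∃ G, IsTest G ∧ tsupport G ⊆ Set.Icc 0 1 ∧ (∀ p, |pd1 G p| ≤ δ) ∧
      ∫ p, |laplacian G p| = ∫ p, |laplacian H p| ∧
      ∫ p, |pd2 (pd1 G) p| = ∫ p, |pd2 (pd1 H) p| := by
  obtain ⟨M, hM⟩ := hH.pd1.exists_abs_le
  obtain ⟨r, hr, hball⟩ := hH.2.isCompact.isBounded.subset_ball_lt 0 0
  set L := 2 * r with hL
  have hL0 : 0 < L := by positivity
  have hsupp {g : ℝ × ℝ → ℝ} (hg : tsupport g ⊆ tsupport H) :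
      Function.support g ⊆ Metric.ball 0 (L / 2) := by
    rw [hL, mul_div_cancel_left₀ r two_ne_zero]
    exact (subset_tsupport g).trans (hg.trans hball)
  obtain ⟨N, hN⟩ := exists_nat_gt (max 0 (L * M / δ))
  obtain ⟨hN0, hNδ⟩ := max_lt_iff.1 hN
  have hN' : N ≠ 0 := Nat.cast_pos.1 hN0 |>.ne'
  have hscale : ((N : ℝ) ^ 2)⁻¹ * (L * N) ^ 2 = L ^ 2 := by field_simp
  refine ⟨((N : ℝ) ^ 2)⁻¹ • tile L N H, ?_, ?_, fun p => ?_, ?_, ?_⟩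
  · refine IsTest.smul ⟨contDiff_tile hH.1, ?_⟩ _
    exact isCompact_Icc.of_isClosed_subset (isClosed_tsupport _)
      (tsupport_tile_subset hL0 hN' (hsupp subset_rfl))
  · exact (tsupport_smul_subset_right (fun _ => ((N : ℝ) ^ 2)⁻¹) _).trans
      (tsupport_tile_subset hL0 hN' (hsupp subset_rfl))
  · have hbound := abs_tile_le hL0 hN' (hsupp (tsupport_pd1_subset H)) hM p
    rw [pd1_smul, pd1_tile hH.differentiable, smul_smul, Pi.smul_apply, smul_eq_mul, abs_mul,
      abs_of_pos (by positivity)]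
    rw [div_lt_iff₀ hδ] at hNδ
    calc ((N : ℝ) ^ 2)⁻¹ * (L * N) * |tile L N (pd1 H) p|
        ≤ ((N : ℝ) ^ 2)⁻¹ * (L * N) * M := by gcongr
      _ = L * M / N := by field_simp
      _ ≤ δ := by rw [div_le_iff₀ hN0]; linarith
  · rw [laplacian_smul, laplacian_tile hH.1, smul_smul, hscale]
    exact integral_abs_smul_tile hL0 hN' hH.laplacian.integrable
      (hsupp (tsupport_laplacian_subset H))
  · rw [pd1_smul, pd2_smul, pd2_pd1_tile hH.1, smul_smul, hscale]
    exact integral_abs_smul_tile hL0 hN' hH.pd1.pd2.integrable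
      (hsupp ((tsupport_pd2_subset _).trans (tsupport_pd1_subset H)))

theorem exists_isTest_mixed_large {ε δ A : ℝ} (hε : 0 < ε) (hδ : 0 < δ) (hA : 0 ≤ A) :
    ∃ G, IsTest G ∧ tsupport G ⊆ Set.Icc 0 1 ∧ (∀ p, |pd1 G p| ≤ δ) ∧
      ∫ p, |laplacian G p| ≤ ε ∧ A ≤ ∫ p, |pd2 (pd1 G) p| := by
  obtain ⟨H, hH, hlap, hmixed⟩ := exists_isTest_laplacian_small_mixed_large hε hA
  obtain ⟨G, hG, hsupp, hpd1, hlapG, hmixedG⟩ := hH.exists_small_pd1 hδ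
  exact ⟨G, hG, hsupp, hpd1, hlapG.trans_le hlap, hmixed.trans_eq hmixedG.symm⟩

/-! ### The potential and the field -/

theorem closedBall_zero_eq_Icc_prod (r : ℝ) :
    Metric.closedBall (0 : ℝ × ℝ) r = Set.Icc (-r, -r) (r, r) := by
  rw [← Prod.mk_zero_zero, ← closedBall_prod_same, Real.closedBall_eq_Icc, Set.Icc_prod_Icc,
    zero_sub, zero_add]

theorem exists_small_cutoff {η : ℝ} (hη : 0 < η) :
    ∃ δ > 0, ∃ K, δ ≤ η ∧ IsTest K ∧ tsupport K ⊆ Set.Icc (-2, -2) (2, 2) ∧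
      (∀ p, 0 ≤ K p ∧ K p ≤ δ) ∧ (∀ p ∈ Set.Icc 0 1, K p = δ) ∧
      ∫ p, |pd1 K p| ≤ η ∧ ∫ p, |pd2 K p| ≤ η := by
  let χ : ContDiffBump (0 : ℝ × ℝ) := ⟨1, 2, one_pos, one_lt_two⟩
  have hχ : IsTest χ := ⟨χ.contDiff, χ.hasCompactSupport⟩
  set D₁ := ∫ p, |pd1 χ p|
  set D₂ := ∫ p, |pd2 χ p|
  have hD₁0 : 0 ≤ D₁ := integral_nonneg fun p => abs_nonneg _
  have hD₂0 : 0 ≤ D₂ := integral_nonneg fun p => abs_nonneg _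
  set δ := η / (1 + D₁ + D₂) with hδ
  have hδ0 : 0 < δ := by positivity
  have hsmall {a : ℝ} (ha : a ≤ 1 + D₁ + D₂) : δ * a ≤ η := by
    rw [hδ, div_mul_eq_mul_div, div_le_iff₀ (by positivity)]
    gcongr
  refine ⟨δ, hδ0, δ • χ, ?_, hχ.smul δ, ?_, fun p => ⟨?_, ?_⟩, fun p hp => ?_, ?_, ?_⟩
  · simpa using hsmall (a := 1) (by linarith)
  · refine (tsupport_smul_subset_right (fun _ => δ) χ).trans ?_
    rw [χ.tsupport_eq, closedBall_zero_eq_Icc_prod]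
  · exact mul_nonneg hδ0.le χ.nonneg
  · exact mul_le_of_le_one_right hδ0.le χ.le_one
  · have hmem : p ∈ Metric.closedBall (0 : ℝ × ℝ) 1 := by
      rw [closedBall_zero_eq_Icc_prod]
      exact Set.Icc_subset_Icc_left (by constructor <;> norm_num) hp
    simp [χ.one_of_mem_closedBall hmem]
  · simp only [pd1_smul, Pi.smul_apply, smul_eq_mul, abs_mul, abs_of_pos hδ0, integral_const_mul]
    exact hsmall (by linarith)
  · simp only [pd2_smul, Pi.smul_apply, smul_eq_mul, abs_mul, abs_of_pos hδ0, integral_const_mul]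
    exact hsmall (by linarith)

section Construction

variable {G K : ℝ × ℝ → ℝ}

theorem integral_pd1_add_mul_laplacian (hG : IsTest G) (hK : IsTest K) {φ : ℝ × ℝ → ℝ}
    (hφ : ContDiff ℝ ∞ φ) :
    ∫ p, (pd1 G + K) p * laplacian φ p =
      -∫ p, fderiv ℝ φ p ((laplacian G + pd1 K) p, pd2 K p) := by
  rw [(hG.pd1.add hK).integral_mul_laplacian hφ, laplacian_pd1_add hG.1 hK.1,
    (hG.laplacian.add hK.pd1).integral_fderiv_apply_prodMk hK.pd2 hφ, neg_neg]

theorem integral_emag_field_le (hG : IsTest G) (hK : IsTest K) :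
    ∫ p, emag ((laplacian G + pd1 K) p, pd2 K p) ≤
      (∫ p, |laplacian G p|) + (∫ p, |pd1 K p|) + ∫ p, |pd2 K p| :=
  (integral_emag_le (hG.laplacian.add hK.pd1).integrable hK.pd2.integrable).trans <|
    add_le_add_left (integral_abs_add_le hG.laplacian.integrable hK.pd1.integrable) _

theorem integral_abs_pd2_pd1_sub_le (hG : IsTest G) (hK : IsTest K) :
    (∫ p, |pd2 (pd1 G) p|) - ∫ p, |pd2 K p| ≤
      ∫ p, emag (pd1 (pd1 G + K) p, pd2 (pd1 G + K) p) := by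
  have hw : IsTest (pd1 G + K) := hG.pd1.add hK
  have htri := integral_abs_add_le hw.pd2.integrable hK.pd2.integrable.neg
  have hcancel (p : ℝ × ℝ) : pd2 (pd1 G + K) p + -pd2 K p = pd2 (pd1 G) p := by
    simp [pd2_add hG.pd1.differentiable hK.differentiable]
  simp only [Pi.neg_apply, hcancel, abs_neg] at htri
  linarith [integral_abs_le_integral_emag hw.pd1.integrable hw.pd2.integrable]

theorem pd1_add_mem_Icc {s : Set (ℝ × ℝ)} {δ : ℝ} (hGs : tsupport G ⊆ s)
    (hG : ∀ p, |pd1 G p| ≤ δ) (hK : ∀ p, 0 ≤ K p ∧ K p ≤ δ) (hKs : ∀ p ∈ s, K p = δ) (p : ℝ × ℝ) :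
    (pd1 G + K) p ∈ Set.Icc 0 (2 * δ) := by
  rw [Pi.add_apply]
  by_cases hp : p ∈ s
  · have hGp := abs_le.1 (hG p)
    rw [hKs p hp]
    constructor <;> linarith
  · have hKp := hK p
    rw [image_eq_zero_of_notMem_tsupport fun h => hp (hGs (tsupport_pd1_subset G h)), zero_add]
    constructor <;> linarith

theorem tsupport_pd1_add_subset (G K : ℝ × ℝ → ℝ) :
    tsupport (pd1 G + K) ⊆ tsupport G ∪ tsupport K :=
  (tsupport_add _ _).trans (Set.union_subset_union_left _ (tsupport_pd1_subset G))

theorem tsupport_field_subset (G K : ℝ × ℝ → ℝ) :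
    tsupport (fun p => ((laplacian G + pd1 K) p, pd2 K p)) ⊆ tsupport G ∪ tsupport K :=
  (tsupport_prodMk_subset _ _).trans <| Set.union_subset
    ((tsupport_add _ _).trans <| Set.union_subset_union (tsupport_laplacian_subset G)
      (tsupport_pd1_subset K))
    ((tsupport_pd2_subset K).trans Set.subset_union_right)

end Construction

/-- For every `n ≥ 1` there exist a nonnegative `w_n ∈ C_0^∞(ℝ²)` and a `C^∞` vector field
`u_n`, both supported in `[-2,2]²`, such that `Δ w_n = div u_n` in the sense of
distributions (`∫ w_n Δφ = -∫ ⟨u_n, ∇φ⟩` for all test `φ`), `‖w_n‖_∞ ≤ 2/n`,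
`‖u_n‖_{L¹} ≤ 3/n`, and `∫ |∇w_n| dx ≥ 1`. -/
theorem small_sup_small_divergence_large_gradient (n : ℕ) (hn : 0 < n) :
    ∃ (w : ℝ × ℝ → ℝ) (u : ℝ × ℝ → ℝ × ℝ),
      ContDiff ℝ (⊤ : ℕ∞) w ∧ HasCompactSupport w ∧
      tsupport w ⊆ Set.Icc ((-2 : ℝ), (-2 : ℝ)) (2, 2) ∧
      (∀ p, 0 ≤ w p) ∧
      ContDiff ℝ (⊤ : ℕ∞) u ∧ HasCompactSupport u ∧
      tsupport u ⊆ Set.Icc ((-2 : ℝ), (-2 : ℝ)) (2, 2) ∧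
      (∀ φ : ℝ × ℝ → ℝ, IsTest φ →
        ∫ p, w p * (pd1 (pd1 φ) p + pd2 (pd2 φ) p) = - ∫ p, fderiv ℝ φ p (u p)) ∧
      (∀ p, |w p| ≤ 2 / n) ∧
      (∫ p, emag (u p)) ≤ 3 / n ∧
      (∫ p, emag (pd1 w p, pd2 w p)) ≥ 1 := by
  have hη : (0 : ℝ) < 1 / n := by positivity
  have hη1 : (1 : ℝ) / n ≤ 1 := div_le_one_of_le₀ (by exact_mod_cast hn) n.cast_nonneg
  have hcast (c : ℝ) : c / n = c * (1 / n) := div_eq_mul_one_div c _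
  obtain ⟨δ, hδ, K, hδη, hK, hKsupp, hKδ, hKone, hK1, hK2⟩ := exists_small_cutoff hη
  obtain ⟨G, hG, hGsupp, hG1, hGlap, hGmixed⟩ := exists_isTest_mixed_large hη hδ zero_le_two
  have hw : IsTest (pd1 G + K) := hG.pd1.add hK
  have hbound := pd1_add_mem_Icc hGsupp hG1 hKδ hKone
  have hsquare : Set.Icc (0 : ℝ × ℝ) 1 ⊆ Set.Icc (-2, -2) (2, 2) :=
    Set.Icc_subset_Icc (by constructor <;> norm_num) (by constructor <;> norm_num)
  have hsupp := Set.union_subset (hGsupp.trans hsquare) hKsupp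
  have husupp := (tsupport_field_subset G K).trans hsupp
  refine ⟨pd1 G + K, fun p => ((laplacian G + pd1 K) p, pd2 K p), hw.1, hw.2,
    (tsupport_pd1_add_subset G K).trans hsupp, fun p => (hbound p).1,
    (hG.laplacian.add hK.pd1).1.prodMk hK.pd2.1,
    isCompact_Icc.of_isClosed_subset (isClosed_tsupport _) husupp, husupp,
    fun φ hφ => integral_pd1_add_mul_laplacian hG hK hφ.1, fun p => ?_, ?_, ?_⟩
  · rw [abs_of_nonneg (hbound p).1, hcast]
    linarith [(hbound p).2]
  · rw [hcast]
    linarith [integral_emag_field_le hG hK]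
  · linarith [integral_abs_pd2_pd1_sub_le hG hK]
end
end
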